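/- There exists an absolute constant c ∈ (0, 1) such that the following holds. Suppose G is preconditioned, μ ∈ (0, F*], k ≥ 1 with k ≤ √m/10, and set ε_step = ε_solve = c k⁻³ and μ^{(i)} := μ − (i ε_step/√m) μ for integers i ≥ 0 (assume μ^{(i)} > 0 for all i considered). Set f^{(0)} := f(μ). Suppose that for each integer 0 ≤ i < k/ε_step we are given a vector r̃^{(i)} ∈ ℝ^E with e^{−ε_solve} r(f^{(i)})_e ≤ r̃^{(i)}_e ≤ e^{ε_solve} r(f^{(i)})_e for every edge e, and a symmetric positive semidefinite matrix L̃^{(i)} with ker L̃^{(i)} = span(1) and e^{−ε_solve} L(f^{(i)}) ⪯ L̃^{(i)} ⪯ e^{ε_solve} L(f^{(i)}), and define f^{(i+1)} := f^{(i)} + (ε_step μ/√m) (R̃^{(i)})⁻¹ B (L̃^{(i)})† χ_{st}, where R̃^{(i)} = diag(r̃^{(i)}). Then for every integer 0 ≤ i ≤ k/ε_step: (1) f^{(i)} is strictly feasible and 1/1000-centered for path parameter μ^{(i)}; (2) ‖R(f^{(i)})^{1/2} (f^{(i)} − f(μ^{(i)}))‖_∞ ≤ 0.1; and (3) e^{−0.2}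 r(f(μ^{(i)}))_e ≤ r(f^{(i)})_e ≤ e^{0.2} r(f(μ^{(i)}))_e for every edge e. -/

import Mathlib

open Matrix

/-- The four Penrose conditions characterizing the Moore–Penrose pseudoinverse. -/
def IsMoorePenrose {n : Type*} [Fintype n] (M Md : Matrix n n ℝ) : Prop :=
  M * Md * M = M ∧ Md * M * Md = Md ∧ (M * Md)ᵀ = M * Md ∧ (Md * M)ᵀ = Md * M

/-- Resistances induced by a flow: `r(f)_e = u⁺(f)_e⁻² + u⁻(f)_e⁻²`. -/
noncomputable def resist {E : Type*} (u f : E → ℝ) (e : E) : ℝ :=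
  ((u e - f e) ^ 2)⁻¹ + ((u e + f e) ^ 2)⁻¹

/-- The Laplacian `L(f) = Bᵀ R(f)⁻¹ B` induced by the resistances of `f`. -/
noncomputable def lapOf {V E : Type*} [Fintype V] [Fintype E] [DecidableEq E]
    (B : Matrix E V ℝ) (u f : E → ℝ) : Matrix V V ℝ :=
  Bᵀ * Matrix.diagonal (fun e => (resist u f e)⁻¹) * B

/-- KKT characterization of the central path flow with parameter `μ`. -/
def IsCentralFlow {V E : Type*} [Fintype V] [Fintype E]
    (B : Matrix E V ℝ) (u : E → ℝ) (χst : V → ℝ) (Fstar μ : ℝ) (f : E → ℝ) : Prop :=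
  (∀ e, |f e| < u e) ∧ Bᵀ *ᵥ f = (Fstar - μ) • χst ∧
    ∃ φ : V → ℝ, ∀ e, (B *ᵥ φ) e = (u e - f e)⁻¹ - (u e + f e)⁻¹

/-- `f` is `γ`-centered for path parameter `μ`. -/
noncomputable def IsCenteredFlow {V E : Type*} [Fintype V] [Fintype E] [DecidableEq V]
    [DecidableEq E] (B : Matrix E V ℝ) (u : E → ℝ) (χst : V → ℝ)
    (Fstar γ μ : ℝ) (f : E → ℝ) : Prop :=
  ∃ Ld : Matrix V V ℝ, IsMoorePenrose (lapOf B u f) Ld ∧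
    Real.sqrt ((Bᵀ *ᵥ f - (Fstar - μ) • χst) ⬝ᵥ
        (Ld *ᵥ (Bᵀ *ᵥ f - (Fstar - μ) • χst))) ≤ γ ∧
    ∃ φ : V → ℝ,
      Real.sqrt (∑ e, (resist u f e)⁻¹ *
          ((B *ᵥ φ) e - ((u e - f e)⁻¹ - (u e + f e)⁻¹)) ^ 2) ≤ γ

/-- Preconditioned graph with parameter `U` and preconditioning edges `P`. -/
def Preconditioned {V E : Type*} [Fintype E] (head tail : E → V) (s t : V)
    (u : E → ℝ) (U : ℝ) (P : Finset E) : Prop :=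
  0 < U ∧
    (∀ e ∈ P, u e = 2 * U ∧ ((head e = s ∧ tail e = t) ∨ (head e = t ∧ tail e = s))) ∧
    (∀ e ∉ P, u e ≤ U) ∧ Fintype.card E ≤ 2 * P.card


/-!
The barrier gradient is monotone along each edge, and its divided difference between two flows is
again a positive resistance (`secantResist`). Hence the difference of two central flows is an
electrical flow for the secant resistances, and Thomson's principle bounds its energy by that of
the flow spreading the demand evenly over the preconditioning edges. The slack of those edges is of
order `μ / m`, because the potential difference between the terminals is at most `2m / μ`, so for
`|μ - μ'| ≤ k μ / √m` the energy is `O(k²)` and the resistances change by at most a factor `O(k⁴)`.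

The same comparison bounds the energy of one damped step by `O(ε²)`, so that the linearization of
the barrier gradient and the approximate solver each contribute a centering error `O(ε²)` in the
norm of the current resistances. Moving the errors of all `k / ε` steps to the final norm costs a
factor `O(k²)` each, for a total of `O(k³ ε)`.
-/

section MoorePenrose

variable {n : Type*} [Fintype n]

theorem exists_isMoorePenrose {A : Matrix n n ℝ} (hA : A.IsSymm) : ∃ Ad, IsMoorePenrose A Ad := by
  classical
  have hA' : IsSelfAdjoint A := isHermitian_iff_isSymm.2 hA
  have cfc_mul_cfc (g h : ℝ → ℝ) : cfc g A * cfc h A = cfc (fun x => g x * h x) A :=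
    (cfc_mul g h A (A.finite_real_spectrum.continuousOn g)
      (A.finite_real_spectrum.continuousOn h)).symm
  have mul_cfc (g : ℝ → ℝ) : A * cfc g A = cfc (fun x => x * g x) A := by
    rw [← cfc_mul_cfc (fun x => x) g, cfc_id' ℝ A]
  have cfc_mul (g : ℝ → ℝ) : cfc g A * A = cfc (fun x => g x * x) A := by
    rw [← cfc_mul_cfc g (fun x => x), cfc_id' ℝ A]
  have transpose_cfc (g : ℝ → ℝ) : (cfc g A)ᵀ = cfc g A :=
    isHermitian_iff_isSymm.1 (cfc_predicate g A)
  refine ⟨cfc (fun x : ℝ => x⁻¹) A, ?_, ?_, ?_, ?_⟩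
  · rw [mul_cfc, cfc_mul]
    simp_rw [mul_inv_mul_cancel]
    exact cfc_id' ℝ A
  · rw [cfc_mul, cfc_mul_cfc]
    congr! 2 with x
    simpa using mul_inv_mul_cancel x⁻¹
  · rw [mul_cfc, transpose_cfc]
  · rw [cfc_mul, transpose_cfc]

theorem IsMoorePenrose.mulVec_mulVec_eq_self {M Md : Matrix n n ℝ} (h : IsMoorePenrose M Md)
    (hM : M.IsSymm) {d : n → ℝ} (hd : ∀ z, M *ᵥ z = 0 → d ⬝ᵥ z = 0) : M *ᵥ (Md *ᵥ d) = d := by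
  obtain ⟨hMMdM, -, hMMd, -⟩ := h
  have mul_mul_eq : M * (M * Md) = M := by
    rw [← hMMd, ← transpose_transpose (M * _), transpose_mul, transpose_transpose, hM.eq, hMMdM,
      hM.eq]
  set z := d - M *ᵥ (Md *ᵥ d) with hz
  have hMz : M *ᵥ z = 0 := by
    rw [hz, mulVec_sub, mulVec_mulVec, mulVec_mulVec, Matrix.mul_assoc, mul_mul_eq, sub_self]
  have range_orthogonal (w : n → ℝ) : (M *ᵥ w) ⬝ᵥ z = 0 := by
    rw [dotProduct_comm, dotProduct_mulVec, ← mulVec_transpose, hM.eq, hMz, zero_dotProduct]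
  have hzz : z ⬝ᵥ z = 0 := by
    conv_lhs => rw [hz, sub_dotProduct, ← hz, hd z hMz, range_orthogonal, sub_zero]
  exact (sub_eq_zero.1 (dotProduct_self_eq_zero.1 hzz)).symm

theorem two_mul_dotProduct_mulVec_le {S L : Matrix n n ℝ} {κ : ℝ} (hS : S.IsSymm)
    (h : ∀ v, |v ⬝ᵥ S *ᵥ v| ≤ κ * (v ⬝ᵥ L *ᵥ v)) (x y : n → ℝ) :
    2 * (x ⬝ᵥ S *ᵥ y) ≤ κ * (x ⬝ᵥ L *ᵥ x + y ⬝ᵥ L *ᵥ y) := by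
  have hadd := (abs_le.1 (h (x + y))).2
  have hsub := (abs_le.1 (h (x - y))).1
  have hsymm : y ⬝ᵥ S *ᵥ x = x ⬝ᵥ S *ᵥ y := by
    rw [dotProduct_mulVec, ← mulVec_transpose, hS.eq, dotProduct_comm]
  simp only [mulVec_add, mulVec_sub, dotProduct_add, dotProduct_sub, add_dotProduct,
    sub_dotProduct, hsymm] at hadd hsub
  linarith

end MoorePenrose

section WeightedNorm

variable {E : Type*} [Fintype E]

/-- The seminorm `‖x‖_W = √(∑ e, w e * x e ^ 2)` for the diagonal matrix `W` with nonnegative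
entries `w`. -/
noncomputable def weightedNorm (w : E → ℝ) : Seminorm ℝ (E → ℝ) :=
  (normSeminorm ℝ (EuclideanSpace ℝ E)).comp
    ((WithLp.linearEquiv 2 ℝ (E → ℝ)).symm.toLinearMap ∘ₗ LinearMap.mulLeft ℝ fun e => √(w e))

variable {w w' : E → ℝ}

theorem weightedNorm_sq (hw : ∀ e, 0 ≤ w e) (x : E → ℝ) :
    weightedNorm w x ^ 2 = ∑ e, w e * x e ^ 2 := by
  simp [weightedNorm, EuclideanSpace.real_norm_sq_eq, mul_pow, Real.sq_sqrt (hw _)]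

theorem weightedNorm_eq_sqrt (hw : ∀ e, 0 ≤ w e) (x : E → ℝ) :
    weightedNorm w x = √(∑ e, w e * x e ^ 2) := by
  rw [← weightedNorm_sq hw, Real.sqrt_sq (apply_nonneg _ _)]

theorem sqrt_mul_abs_le_weightedNorm (w x : E → ℝ) (e : E) :
    √(w e) * |x e| ≤ weightedNorm w x := by
  simpa [weightedNorm, abs_mul, abs_of_nonneg (Real.sqrt_nonneg _)] using
    PiLp.norm_apply_le (WithLp.toLp 2 ((fun e => √(w e)) * x) : EuclideanSpace ℝ E) e

theorem weightedNorm_le_mul_weightedNorm {M : ℝ} (hM : 0 ≤ M) (hw : ∀ e, 0 ≤ w e)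
    (hw' : ∀ e, 0 ≤ w' e) {x y : E → ℝ} (h : ∀ e, w e * x e ^ 2 ≤ M ^ 2 * (w' e * y e ^ 2)) :
    weightedNorm w x ≤ M * weightedNorm w' y := by
  refine le_of_sq_le_sq ?_ (by positivity)
  rw [mul_pow, weightedNorm_sq hw, weightedNorm_sq hw', Finset.mul_sum]
  exact Finset.sum_le_sum fun e _ => h e

theorem weightedNorm_le_mul_of_le {M : ℝ} (hM : 0 ≤ M) (hw : ∀ e, 0 ≤ w e)
    (hw' : ∀ e, 0 ≤ w' e) (h : ∀ e, w e ≤ M ^ 2 * w' e) (x : E → ℝ) :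
    weightedNorm w x ≤ M * weightedNorm w' x :=
  weightedNorm_le_mul_weightedNorm hM hw hw' fun e => by
    rw [← mul_assoc]
    exact mul_le_mul_of_nonneg_right (h e) (sq_nonneg _)

theorem weightedNorm_mul_le {M : ℝ} (hM : 0 ≤ M) (hw : ∀ e, 0 ≤ w e) {c : E → ℝ}
    (hc : ∀ e, |c e| ≤ M) (x : E → ℝ) : weightedNorm w (c * x) ≤ M * weightedNorm w x :=
  weightedNorm_le_mul_weightedNorm hM hw hw fun e => by
    calc w e * (c e * x e) ^ 2 = c e ^ 2 * (w e * x e ^ 2) := by ring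
      _ ≤ M ^ 2 * (w e * x e ^ 2) :=
        mul_le_mul_of_nonneg_right (sq_le_sq' (abs_le.1 (hc e)).1 (abs_le.1 (hc e)).2)
          (mul_nonneg (hw e) (sq_nonneg _))

theorem weightedNorm_inv_mul (hw : ∀ e, 0 < w e) (x : E → ℝ) :
    weightedNorm w⁻¹ (w * x) = weightedNorm w x := by
  rw [weightedNorm_eq_sqrt (w := w⁻¹) (fun e => (inv_pos.2 (hw e)).le),
    weightedNorm_eq_sqrt fun e => (hw e).le]
  congr 1
  refine Finset.sum_congr rfl fun e _ => ?_
  have := (hw e).ne'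
  simp only [Pi.inv_apply, Pi.mul_apply]
  field_simp

theorem weightedNorm_mul_inv (hw : ∀ e, 0 < w e) (x : E → ℝ) :
    weightedNorm w (w⁻¹ * x) = weightedNorm w⁻¹ x := by
  simpa using weightedNorm_inv_mul (w := w⁻¹) (fun e => inv_pos.2 (hw e)) x

theorem weightedNorm_mul_sub_inv_mul_le {s : E → ℝ} {η : ℝ} (hw : ∀ e, 0 < w e) (hη : 0 ≤ η)
    (hs : ∀ e, |s e * w e - 1| ≤ η) (x y : E → ℝ) :
    weightedNorm w (s * x - w⁻¹ * y) ≤ η * weightedNorm w⁻¹ x + weightedNorm w⁻¹ (x - y) := by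
  have hsplit : s * x - w⁻¹ * y = (s * w - 1) * (w⁻¹ * x) + w⁻¹ * (x - y) := by
    ext e
    have := (hw e).ne'
    simp only [Pi.sub_apply, Pi.add_apply, Pi.mul_apply, Pi.inv_apply, Pi.one_apply]
    field_simp
    ring
  rw [hsplit, ← weightedNorm_mul_inv hw x, ← weightedNorm_mul_inv hw (x - y)]
  exact (map_add_le_add _ _ _).trans (add_le_add_left
    (weightedNorm_mul_le hη (fun e => (hw e).le) hs _) _)

theorem mul_dotProduct_self (hw : ∀ e, 0 ≤ w e) (x : E → ℝ) :
    (w * x) ⬝ᵥ x = weightedNorm w x ^ 2 := by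
  rw [weightedNorm_sq hw]
  exact Finset.sum_congr rfl fun e _ => by simp only [Pi.mul_apply]; ring

theorem eq_zero_of_weightedNorm_eq_zero (hw : ∀ e, 0 < w e) {x : E → ℝ}
    (hx : weightedNorm w x = 0) : x = 0 := by
  ext e
  have h := sqrt_mul_abs_le_weightedNorm w x e
  rw [hx] at h
  exact abs_nonpos_iff.1 (nonpos_of_mul_nonpos_right h (Real.sqrt_pos.2 (hw e)))

theorem dotProduct_le_weightedNorm_mul (hw : ∀ e, 0 < w e) (x y : E → ℝ) :
    x ⬝ᵥ y ≤ weightedNorm w⁻¹ x * weightedNorm w y := by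
  rw [weightedNorm_eq_sqrt (w := w⁻¹) (fun e => (inv_pos.2 (hw e)).le),
    weightedNorm_eq_sqrt fun e => (hw e).le]
  refine le_of_eq_of_le (Finset.sum_congr rfl fun e _ => ?_)
    ((Real.sum_mul_le_sqrt_mul_sqrt _ (fun e => √(w e)⁻¹ * x e) fun e => √(w e) * y e).trans_eq ?_)
  · have sqrt_inv_mul_sqrt : √(w e)⁻¹ * √(w e) = 1 := by
      rw [Real.sqrt_inv, inv_mul_cancel₀ (Real.sqrt_pos.2 (hw e)).ne']
    linear_combination (-(x e * y e)) * sqrt_inv_mul_sqrt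
  · simp [mul_pow, Real.sq_sqrt (hw _).le]

end WeightedNorm

section ElectricalFlow

variable {V E : Type*} [Fintype E]

/-- The Laplacian `Bᵀ R⁻¹ B` of the resistances `r`. -/
noncomputable def resistanceLaplacian [DecidableEq E] (B : Matrix E V ℝ) (r : E → ℝ) :
    Matrix V V ℝ :=
  Bᵀ * diagonal r⁻¹ * B

theorem resistanceLaplacian_isSymm [DecidableEq E] (B : Matrix E V ℝ) (r : E → ℝ) :
    (resistanceLaplacian B r).IsSymm := by
  simp [resistanceLaplacian, IsSymm, transpose_mul, Matrix.mul_assoc]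

variable [Fintype V]

theorem transpose_mulVec_dotProduct (B : Matrix E V ℝ) (q : E → ℝ) (x : V → ℝ) :
    (Bᵀ *ᵥ q) ⬝ᵥ x = q ⬝ᵥ B *ᵥ x := by
  rw [dotProduct_mulVec, mulVec_transpose]

/-- An electrical flow: `g` routes the demand `χ` and obeys Ohm's law for the resistances `r`. -/
structure IsElectricalFlow (B : Matrix E V ℝ) (r : E → ℝ) (χ : V → ℝ) (g : E → ℝ) : Prop where
  demand : Bᵀ *ᵥ g = χ
  ohm : ∃ φ : V → ℝ, B *ᵥ φ = r * g

variable {B : Matrix E V ℝ} {r : E → ℝ} {χ : V → ℝ}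

/-- Thomson's principle. -/
theorem IsElectricalFlow.weightedNorm_le {g : E → ℝ} (hg : IsElectricalFlow B r χ g)
    (hr : ∀ e, 0 < r e) {y : E → ℝ} (hy : Bᵀ *ᵥ y = χ) : weightedNorm r g ≤ weightedNorm r y := by
  obtain ⟨φ, hφ⟩ := hg.ohm
  have key : weightedNorm r g * weightedNorm r g ≤ weightedNorm r g * weightedNorm r y :=
    calc weightedNorm r g * weightedNorm r g = (r * g) ⬝ᵥ g := by
          rw [← sq, mul_dotProduct_self fun e => (hr e).le]
      _ = (r * g) ⬝ᵥ y := by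
          rw [← hφ, dotProduct_comm, ← transpose_mulVec_dotProduct, hg.demand, ← hy,
            transpose_mulVec_dotProduct, dotProduct_comm]
      _ ≤ weightedNorm r⁻¹ (r * g) * weightedNorm r y := dotProduct_le_weightedNorm_mul hr _ _
      _ = weightedNorm r g * weightedNorm r y := by rw [weightedNorm_inv_mul hr]
  rcases (apply_nonneg (weightedNorm r) g).eq_or_lt with h | h
  · rw [← h]
    exact apply_nonneg _ _
  · exact le_of_mul_le_mul_left key h

theorem resistanceLaplacian_mulVec [DecidableEq E] (B : Matrix E V ℝ) (r : E → ℝ) (x : V → ℝ) :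
    resistanceLaplacian B r *ᵥ x = Bᵀ *ᵥ (r⁻¹ * (B *ᵥ x)) := by
  rw [resistanceLaplacian, ← mulVec_mulVec, ← mulVec_mulVec]
  congr 1
  ext e
  simp [mulVec_diagonal]

theorem dotProduct_resistanceLaplacian_mulVec [DecidableEq E] (B : Matrix E V ℝ)
    (hr : ∀ e, 0 < r e) (x : V → ℝ) :
    x ⬝ᵥ resistanceLaplacian B r *ᵥ x = weightedNorm r⁻¹ (B *ᵥ x) ^ 2 := by
  rw [resistanceLaplacian_mulVec, dotProduct_comm, transpose_mulVec_dotProduct,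
    mul_dotProduct_self (w := r⁻¹) fun e => (inv_pos.2 (hr e)).le]

theorem isElectricalFlow_of_isMoorePenrose [DecidableEq E] {Ld : Matrix V V ℝ} (hr : ∀ e, 0 < r e)
    (hLd : IsMoorePenrose (resistanceLaplacian B r) Ld) (q : E → ℝ) :
    IsElectricalFlow B r (Bᵀ *ᵥ q) (r⁻¹ * (B *ᵥ (Ld *ᵥ (Bᵀ *ᵥ q)))) where
  demand := by
    rw [← resistanceLaplacian_mulVec]
    refine hLd.mulVec_mulVec_eq_self (resistanceLaplacian_isSymm B r) fun z hz => ?_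
    have hBz : weightedNorm r⁻¹ (B *ᵥ z) ^ 2 = 0 := by
      rw [← dotProduct_resistanceLaplacian_mulVec B hr, hz, dotProduct_zero]
    rw [transpose_mulVec_dotProduct, eq_zero_of_weightedNorm_eq_zero
      (fun e => inv_pos.2 (hr e)) (pow_eq_zero_iff two_ne_zero |>.1 hBz), dotProduct_zero]
  ohm := ⟨Ld *ᵥ (Bᵀ *ᵥ q), by
    ext e
    simp [mul_inv_cancel_left₀ (hr e).ne']⟩

theorem exists_isElectricalFlow (B : Matrix E V ℝ) (hr : ∀ e, 0 < r e) (q : E → ℝ) :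
    ∃ g, IsElectricalFlow B r (Bᵀ *ᵥ q) g := by
  classical
  obtain ⟨_, hLd⟩ := exists_isMoorePenrose (resistanceLaplacian_isSymm B r)
  exact ⟨_, isElectricalFlow_of_isMoorePenrose hr hLd q⟩

theorem sqrt_dotProduct_pinv_mulVec_le [DecidableEq E] {Ld : Matrix V V ℝ} (hr : ∀ e, 0 < r e)
    (hLd : IsMoorePenrose (resistanceLaplacian B r) Ld) (q : E → ℝ) :
    √((Bᵀ *ᵥ q) ⬝ᵥ Ld *ᵥ (Bᵀ *ᵥ q)) ≤ weightedNorm r q := by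
  have hflow := isElectricalFlow_of_isMoorePenrose hr hLd q
  set ψ := Ld *ᵥ (Bᵀ *ᵥ q)
  have energy_eq : (Bᵀ *ᵥ q) ⬝ᵥ ψ = weightedNorm r (r⁻¹ * (B *ᵥ ψ)) ^ 2 := by
    conv_lhs => rw [← hflow.demand]
    rw [transpose_mulVec_dotProduct, mul_dotProduct_self (w := r⁻¹)
      fun e => (inv_pos.2 (hr e)).le, weightedNorm_mul_inv hr]
  rw [energy_eq, Real.sqrt_sq (apply_nonneg _ _)]
  exact hflow.weightedNorm_le hr rfl

end ElectricalFlow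

section ApproxElectricalFlow

variable {V E : Type*} [Fintype E] [DecidableEq E] {B : Matrix E V ℝ} {r : E → ℝ}
  {χ : V → ℝ} {ε : ℝ} {Lt : Matrix V V ℝ}

theorem one_sub_two_mul_le_exp_neg (hε : 0 ≤ ε) : 1 - 2 * ε ≤ Real.exp (-ε) := by
  linarith [Real.add_one_le_exp (-ε)]

theorem exp_le_one_add_two_mul (hε : 0 ≤ ε) (hε1 : ε ≤ 1) : Real.exp ε ≤ 1 + 2 * ε := by
  have h := (abs_le.1 (Real.abs_exp_sub_one_le (x := ε) (by rwa [abs_of_nonneg hε]))).2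
  rw [abs_of_nonneg hε] at h
  linarith

theorem abs_inv_mul_sub_one_le {a b : ℝ} (hε : 0 ≤ ε) (hε1 : ε ≤ 1) (ha : 0 < a)
    (hl : Real.exp (-ε) * a ≤ b) (hu : b ≤ Real.exp ε * a) : |b⁻¹ * a - 1| ≤ 2 * ε := by
  have hb : 0 < b := (mul_pos (Real.exp_pos _) ha).trans_le hl
  have hle : b⁻¹ * a ≤ Real.exp ε := by
    rw [inv_mul_le_iff₀ hb, ← div_le_iff₀ (Real.exp_pos _), div_eq_inv_mul, ← Real.exp_neg]
    exact hl
  have hge : Real.exp (-ε) ≤ b⁻¹ * a := by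
    rw [le_inv_mul_iff₀ hb, Real.exp_neg, ← div_eq_mul_inv, div_le_iff₀ (Real.exp_pos _), mul_comm]
    exact hu
  exact abs_le.2 ⟨by linarith [one_sub_two_mul_le_exp_neg hε],
    by linarith [exp_le_one_add_two_mul hε hε1]⟩

theorem isSymm_of_approx (hl : (Lt - Real.exp (-ε) • resistanceLaplacian B r).PosSemidef) :
    Lt.IsSymm := by
  have h := (isHermitian_iff_isSymm.1 hl.1).add
    ((resistanceLaplacian_isSymm B r).smul (Real.exp (-ε)))
  rwa [sub_add_cancel] at h

variable [Fintype V]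

theorem dotProduct_approx_mulVec_mem_Icc
    (hl : (Lt - Real.exp (-ε) • resistanceLaplacian B r).PosSemidef)
    (hu : (Real.exp ε • resistanceLaplacian B r - Lt).PosSemidef) (v : V → ℝ) :
    v ⬝ᵥ Lt *ᵥ v ∈ Set.Icc (Real.exp (-ε) * (v ⬝ᵥ resistanceLaplacian B r *ᵥ v))
      (Real.exp ε * (v ⬝ᵥ resistanceLaplacian B r *ᵥ v)) := by
  have hl' := hl.dotProduct_mulVec_nonneg v
  have hu' := hu.dotProduct_mulVec_nonneg v
  simp only [star_trivial, sub_mulVec, smul_mulVec, dotProduct_sub, dotProduct_smul,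
    smul_eq_mul] at hl' hu'
  exact ⟨sub_nonneg.1 hl', sub_nonneg.1 hu'⟩

theorem mulVec_eq_zero_of_approx_mulVec_eq_zero (hr : ∀ e, 0 < r e)
    (hl : (Lt - Real.exp (-ε) • resistanceLaplacian B r).PosSemidef)
    (hu : (Real.exp ε • resistanceLaplacian B r - Lt).PosSemidef) {z : V → ℝ} (hz : Lt *ᵥ z = 0) :
    B *ᵥ z = 0 := by
  have h := (dotProduct_approx_mulVec_mem_Icc hl hu z).1
  rw [hz, dotProduct_zero, dotProduct_resistanceLaplacian_mulVec B hr] at h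
  exact eq_zero_of_weightedNorm_eq_zero (fun e => inv_pos.2 (hr e)) <| sq_nonpos_iff _ |>.1 <|
    nonpos_of_mul_nonpos_right h (Real.exp_pos _)

theorem weightedNorm_mulVec_sub_le (hr : ∀ e, 0 < r e) (hε : 0 < ε) (hε1 : ε ≤ 1)
    (hl : (Lt - Real.exp (-ε) • resistanceLaplacian B r).PosSemidef)
    (hu : (Real.exp ε • resistanceLaplacian B r - Lt).PosSemidef) {ψ φ : V → ℝ}
    (h : Lt *ᵥ ψ = resistanceLaplacian B r *ᵥ φ) :
    weightedNorm r⁻¹ (B *ᵥ (ψ - φ)) ≤ 2 * ε * weightedNorm r⁻¹ (B *ᵥ ψ) := by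
  set L := resistanceLaplacian B r
  have hquad (v : V → ℝ) : |v ⬝ᵥ (L - Lt) *ᵥ v| ≤ 2 * ε * (v ⬝ᵥ L *ᵥ v) := by
    obtain ⟨hlv, huv⟩ := dotProduct_approx_mulVec_mem_Icc hl hu v
    have hLv : 0 ≤ v ⬝ᵥ L *ᵥ v := by
      rw [dotProduct_resistanceLaplacian_mulVec B hr]
      positivity
    rw [sub_mulVec, dotProduct_sub, abs_le]
    constructor
    · linarith [mul_le_mul_of_nonneg_right (exp_le_one_add_two_mul hε.le hε1) hLv]
    · linarith [mul_le_mul_of_nonneg_right (one_sub_two_mul_le_exp_neg hε.le) hLv]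
  have residual : (ψ - φ) ⬝ᵥ L *ᵥ (ψ - φ) = (ψ - φ) ⬝ᵥ (L - Lt) *ᵥ ψ := by
    rw [mulVec_sub, sub_mulVec, h]
  have hpol := two_mul_dotProduct_mulVec_le
    ((resistanceLaplacian_isSymm B r).sub (isSymm_of_approx hl)) hquad (ψ - φ) ((2 * ε) • ψ)
  simp only [mulVec_smul, dotProduct_smul, smul_dotProduct, smul_eq_mul] at hpol
  rw [← residual, dotProduct_resistanceLaplacian_mulVec B hr,
    dotProduct_resistanceLaplacian_mulVec B hr] at hpol
  refine le_of_sq_le_sq (le_of_mul_le_mul_left ?_ (by positivity : (0 : ℝ) < 2 * ε)) (by positivity)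
  linear_combination hpol

/-- An `ε`-approximate electrical flow: the flow of `χ` computed by Ohm's law from `e^{±ε}`
approximations `rt` of the resistances and `Lt` of the Laplacian. -/
def IsApproxElectricalFlow (B : Matrix E V ℝ) (r : E → ℝ) (χ : V → ℝ) (ε : ℝ) (g : E → ℝ) : Prop :=
  ∃ (rt : E → ℝ) (Lt Ltd : Matrix V V ℝ),
    (∀ e, Real.exp (-ε) * r e ≤ rt e ∧ rt e ≤ Real.exp ε * r e) ∧
    (Lt - Real.exp (-ε) • resistanceLaplacian B r).PosSemidef ∧
    (Real.exp ε • resistanceLaplacian B r - Lt).PosSemidef ∧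
    IsMoorePenrose Lt Ltd ∧ g = rt⁻¹ * (B *ᵥ (Ltd *ᵥ χ))

theorem IsApproxElectricalFlow.weightedNorm_sub_le {g g₀ : E → ℝ}
    (hg : IsApproxElectricalFlow B r χ ε g) (hg₀ : IsElectricalFlow B r χ g₀)
    (hr : ∀ e, 0 < r e) (hε : 0 < ε) (hε10 : ε ≤ 1 / 10) :
    weightedNorm r (g - g₀) ≤ 5 * ε * weightedNorm r g₀ := by
  obtain ⟨rt, Lt, Ltd, hrt, hl, hu, hLtd, rfl⟩ := hg
  obtain ⟨rfl, φ, hφ⟩ := hg₀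
  have hε1 : ε ≤ 1 := by linarith
  set ψ := Ltd *ᵥ (Bᵀ *ᵥ g₀)
  have hg₀_eq : g₀ = r⁻¹ * (B *ᵥ φ) := by
    ext e
    simp [hφ, inv_mul_cancel_left₀ (hr e).ne']
  have hψ : Lt *ᵥ ψ = resistanceLaplacian B r *ᵥ φ := by
    rw [resistanceLaplacian_mulVec, ← hg₀_eq]
    refine hLtd.mulVec_mulVec_eq_self (isSymm_of_approx hl) fun z hz => ?_
    rw [transpose_mulVec_dotProduct, mulVec_eq_zero_of_approx_mulVec_eq_zero hr hl hu hz,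
      dotProduct_zero]
  have hsub := weightedNorm_mulVec_sub_le hr hε hε1 hl hu hψ
  set N := weightedNorm r⁻¹ (B *ᵥ ψ)
  have hN : N ≤ weightedNorm r g₀ + 2 * ε * N := by
    calc N = weightedNorm r⁻¹ (B *ᵥ φ + B *ᵥ (ψ - φ)) := by rw [← mulVec_add, add_sub_cancel]
      _ ≤ weightedNorm r⁻¹ (B *ᵥ φ) + weightedNorm r⁻¹ (B *ᵥ (ψ - φ)) := map_add_le_add _ _ _
      _ ≤ weightedNorm r g₀ + 2 * ε * N := by rw [hφ, weightedNorm_inv_mul hr]; gcongr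
  have hN' : 4 * N ≤ 5 * weightedNorm r g₀ := by
    nlinarith [mul_le_mul_of_nonneg_right hε10 (apply_nonneg (weightedNorm r⁻¹) (B *ᵥ ψ))]
  have hrt_near (e) : |(rt⁻¹) e * r e - 1| ≤ 2 * ε :=
    abs_inv_mul_sub_one_le hε.le hε1 (hr e) (hrt e).1 (hrt e).2
  calc weightedNorm r (rt⁻¹ * (B *ᵥ ψ) - g₀)
      ≤ 2 * ε * N + weightedNorm r⁻¹ (B *ᵥ ψ - B *ᵥ φ) := by
        rw [hg₀_eq]
        exact weightedNorm_mul_sub_inv_mul_le hr (by positivity) hrt_near _ _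
    _ ≤ 2 * ε * N + 2 * ε * N := by
        rw [← mulVec_sub]
        gcongr
    _ = ε * (4 * N) := by ring
    _ ≤ ε * (5 * weightedNorm r g₀) := by gcongr
    _ = 5 * ε * weightedNorm r g₀ := by ring

end ApproxElectricalFlow

section WithinFactor

variable {E : Type*} {M M' : ℝ} {r r' r'' : E → ℝ}

/-- The weights `r` and `r'` agree entrywise up to the multiplicative factor `M`. -/
def WithinFactor (M : ℝ) (r r' : E → ℝ) : Prop :=
  ∀ e, r e ≤ M * r' e ∧ r' e ≤ M * r e

theorem WithinFactor.symm (h : WithinFactor M r r') : WithinFactor M r' r := fun e => (h e).symm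

theorem WithinFactor.trans (hM : 0 ≤ M) (hM' : 0 ≤ M') (h : WithinFactor M r r')
    (h' : WithinFactor M' r' r'') : WithinFactor (M * M') r r'' := fun e =>
  ⟨by nlinarith [(h e).1, mul_le_mul_of_nonneg_left (h' e).1 hM],
    by nlinarith [(h' e).2, mul_le_mul_of_nonneg_left (h e).2 hM']⟩

theorem WithinFactor.mono (hr : ∀ e, 0 ≤ r e) (hr' : ∀ e, 0 ≤ r' e) (hMM' : M ≤ M')
    (h : WithinFactor M r r') : WithinFactor M' r r' := fun e =>
  ⟨(h e).1.trans (mul_le_mul_of_nonneg_right hMM' (hr' e)),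
    (h e).2.trans (mul_le_mul_of_nonneg_right hMM' (hr e))⟩

theorem WithinFactor.inv (hr : ∀ e, 0 < r e) (hr' : ∀ e, 0 < r' e) (h : WithinFactor M r r') :
    WithinFactor M r⁻¹ r'⁻¹ := fun e => by
  simp only [Pi.inv_apply, ← div_eq_mul_inv]
  rw [le_div_iff₀ (hr' e), le_div_iff₀ (hr e), inv_mul_le_iff₀ (hr e), inv_mul_le_iff₀ (hr' e),
    mul_comm (r e), mul_comm (r' e)]
  exact ⟨(h e).2, (h e).1⟩

theorem WithinFactor.exp_neg_mul_le {a : ℝ} (h : WithinFactor (Real.exp a) r r')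
    (e : E) : Real.exp (-a) * r' e ≤ r e := by
  rw [Real.exp_neg, inv_mul_le_iff₀ (Real.exp_pos a)]
  exact (h e).2

end WithinFactor

section Barrier

variable {E : Type*} {u f f' : E → ℝ} {e : E}

/-- The gradient `1/u⁺(f) - 1/u⁻(f)` of the logarithmic barrier. -/
noncomputable def barrierGrad (u f : E → ℝ) (e : E) : ℝ :=
  (u e - f e)⁻¹ - (u e + f e)⁻¹

/-- The divided difference of `barrierGrad` between the flows `f` and `f'`. -/
noncomputable def secantResist (u f f' : E → ℝ) (e : E) : ℝ :=
  (u e - f e)⁻¹ * (u e - f' e)⁻¹ + (u e + f e)⁻¹ * (u e + f' e)⁻¹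

theorem sub_pos_of_abs_lt {a b : ℝ} (h : |a| < b) : 0 < b - a := sub_pos.2 (abs_lt.1 h).2

theorem add_pos_of_abs_lt {a b : ℝ} (h : |a| < b) : 0 < b + a := by linarith [(abs_lt.1 h).1]

theorem secantResist_pos (hf : |f e| < u e) (hf' : |f' e| < u e) : 0 < secantResist u f f' e := by
  have := sub_pos_of_abs_lt hf
  have := sub_pos_of_abs_lt hf'
  have := add_pos_of_abs_lt hf
  have := add_pos_of_abs_lt hf'
  unfold secantResist
  positivity

theorem secantResist_self (u f : E → ℝ) : secantResist u f f = resist u f := by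
  ext e
  simp only [secantResist, resist, sq, mul_inv]

theorem resist_pos (hf : |f e| < u e) : 0 < resist u f e :=
  secantResist_self u f ▸ secantResist_pos hf hf

theorem barrierGrad_sub_barrierGrad (hf : |f e| < u e) (hf' : |f' e| < u e) :
    barrierGrad u f' e - barrierGrad u f e = secantResist u f f' e * (f' e - f e) := by
  have := (sub_pos_of_abs_lt hf).ne'
  have := (sub_pos_of_abs_lt hf').ne'
  have := (add_pos_of_abs_lt hf).ne'
  have := (add_pos_of_abs_lt hf').ne'
  unfold barrierGrad secantResist
  field_simp
  ring

theorem inv_slack_sq_le_resist (u f : E → ℝ) (e : E) : ((u e - |f e|)⁻¹) ^ 2 ≤ resist u f e := by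
  unfold resist
  rcases abs_cases (f e) with ⟨h, -⟩ | ⟨h, -⟩ <;> rw [h, inv_pow]
  · exact le_add_of_nonneg_right (by positivity)
  · rw [sub_neg_eq_add]
    exact le_add_of_nonneg_left (by positivity)

theorem resist_le_sq_mul_resist {C : ℝ} (hf : |f e| < u e)
    (hsub : (u e - f e)⁻¹ ≤ C * (u e - f' e)⁻¹) (hadd : (u e + f e)⁻¹ ≤ C * (u e + f' e)⁻¹) :
    resist u f e ≤ C ^ 2 * resist u f' e := by
  have h₁ := pow_le_pow_left₀ (inv_pos.2 (sub_pos_of_abs_lt hf)).le hsub 2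
  have h₂ := pow_le_pow_left₀ (inv_pos.2 (add_pos_of_abs_lt hf)).le hadd 2
  simp only [mul_pow, inv_pow] at h₁ h₂
  unfold resist
  linarith

theorem inv_le_mul_inv_of_abs_sub_le {a a' η : ℝ} (ha : 0 < a) (ha' : 0 < a')
    (h : |a' - a| ≤ η * a) : a⁻¹ ≤ (1 + η) * a'⁻¹ := by
  rw [← div_eq_mul_inv, le_div_iff₀ ha', inv_mul_le_iff₀ ha]
  linarith [(abs_le.1 h).2]

theorem inv_le_mul_inv_of_abs_sub_le_of_le_half {a a' η : ℝ} (ha : 0 < a) (ha' : 0 < a')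
    (hη0 : 0 ≤ η) (hη : η ≤ 1 / 2) (h : |a' - a| ≤ η * a) : a'⁻¹ ≤ (1 + 2 * η) * a⁻¹ := by
  rw [← div_eq_mul_inv, le_div_iff₀ ha, inv_mul_le_iff₀ ha']
  nlinarith [(abs_le.1 h).1, mul_nonneg (mul_nonneg hη0 ha.le) (sub_nonneg.2 hη)]

section Fintype

variable [Fintype E] {η : ℝ}

theorem abs_le_mul_slack_of_weightedNorm_le {d : E → ℝ} (hf : |f e| < u e)
    (hd : weightedNorm (resist u f) d ≤ η) : |d e| ≤ η * (u e - |f e|) := by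
  have hslack : 0 < u e - |f e| := sub_pos.2 hf
  have hsqrt : (u e - |f e|)⁻¹ ≤ √(resist u f e) :=
    Real.le_sqrt_of_sq_le (inv_slack_sq_le_resist u f e)
  rw [← div_le_iff₀ hslack, div_eq_inv_mul]
  calc (u e - |f e|)⁻¹ * |d e| ≤ √(resist u f e) * |d e| := by gcongr
    _ ≤ weightedNorm (resist u f) d := sqrt_mul_abs_le_weightedNorm _ d e
    _ ≤ η := hd

theorem abs_sub_slack_sub_le (hf : |f e| < u e) (h : weightedNorm (resist u f) (f' - f) ≤ η) :
    |(u e - f' e) - (u e - f e)| ≤ η * (u e - f e) := by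
  have hη : 0 ≤ η := (apply_nonneg _ _).trans h
  calc |(u e - f' e) - (u e - f e)| = |(f' - f) e| := by rw [← abs_neg]; congr 1; simp
    _ ≤ η * (u e - |f e|) := abs_le_mul_slack_of_weightedNorm_le hf h
    _ ≤ η * (u e - f e) := by gcongr; exact le_abs_self _

theorem abs_add_slack_sub_le (hf : |f e| < u e) (h : weightedNorm (resist u f) (f' - f) ≤ η) :
    |(u e + f' e) - (u e + f e)| ≤ η * (u e + f e) := by
  have hη : 0 ≤ η := (apply_nonneg _ _).trans h
  calc |(u e + f' e) - (u e + f e)| = |(f' - f) e| := by congr 1; simp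
    _ ≤ η * (u e - |f e|) := abs_le_mul_slack_of_weightedNorm_le hf h
    _ ≤ η * (u e + f e) := by gcongr; linarith [neg_abs_le (f e)]

theorem abs_lt_of_weightedNorm_sub_lt_one (hf : |f e| < u e)
    (h : weightedNorm (resist u f) (f' - f) < 1) : |f' e| < u e := by
  have hd : |(f' - f) e| < u e - |f e| :=
    (abs_le_mul_slack_of_weightedNorm_le hf le_rfl).trans_lt
      (mul_lt_of_lt_one_left (sub_pos.2 hf) h)
  have htri : |f' e| ≤ |f e| + |(f' - f) e| := by
    simpa using abs_add_le (f e) ((f' - f) e)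
  linarith

theorem resist_le_mul_secantResist (hf : |f e| < u e) (hf' : |f' e| < u e)
    (h : weightedNorm (resist u f) (f' - f) ≤ η) :
    resist u f e ≤ (1 + η) * secantResist u f f' e := by
  have hsub := mul_le_mul_of_nonneg_left (inv_le_mul_inv_of_abs_sub_le (sub_pos_of_abs_lt hf)
    (sub_pos_of_abs_lt hf') (abs_sub_slack_sub_le hf h)) (inv_pos.2 (sub_pos_of_abs_lt hf)).le
  have hadd := mul_le_mul_of_nonneg_left (inv_le_mul_inv_of_abs_sub_le (add_pos_of_abs_lt hf)
    (add_pos_of_abs_lt hf') (abs_add_slack_sub_le hf h)) (inv_pos.2 (add_pos_of_abs_lt hf)).le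
  rw [← secantResist_self]
  unfold secantResist
  linarith

theorem abs_secantResist_sub_resist_le (hf : |f e| < u e) (hf' : |f' e| < u e) (hη : η ≤ 1 / 2)
    (h : weightedNorm (resist u f) (f' - f) ≤ η) :
    |secantResist u f f' e - resist u f e| ≤ 2 * η * resist u f e := by
  have hη0 : 0 ≤ η := (apply_nonneg _ _).trans h
  have hsub := mul_le_mul_of_nonneg_left
    (inv_le_mul_inv_of_abs_sub_le_of_le_half (sub_pos_of_abs_lt hf) (sub_pos_of_abs_lt hf') hη0 hη
      (abs_sub_slack_sub_le hf h)) (inv_pos.2 (sub_pos_of_abs_lt hf)).le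
  have hadd := mul_le_mul_of_nonneg_left
    (inv_le_mul_inv_of_abs_sub_le_of_le_half (add_pos_of_abs_lt hf) (add_pos_of_abs_lt hf') hη0 hη
      (abs_add_slack_sub_le hf h)) (inv_pos.2 (add_pos_of_abs_lt hf)).le
  have hlower := resist_le_mul_secantResist hf hf' h
  have hupper : secantResist u f f' e ≤ (1 + 2 * η) * resist u f e := by
    rw [← secantResist_self]
    unfold secantResist
    linarith
  exact abs_le.2 ⟨by nlinarith [secantResist_pos hf hf'], by linarith⟩

theorem withinFactor_resist_of_weightedNorm_le (hf : ∀ e, |f e| < u e) (hf' : ∀ e, |f' e| < u e)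
    (hη : η ≤ 1 / 2) (h : weightedNorm (resist u f) (f' - f) ≤ η) :
    WithinFactor ((1 + 2 * η) ^ 2) (resist u f') (resist u f) := fun e => by
  have hη0 : 0 ≤ η := (apply_nonneg _ _).trans h
  have hf_sub := sub_pos_of_abs_lt (hf e)
  have hf_add := add_pos_of_abs_lt (hf e)
  have hf'_sub := sub_pos_of_abs_lt (hf' e)
  have hf'_add := add_pos_of_abs_lt (hf' e)
  have hsub := abs_sub_slack_sub_le (hf e) h
  have hadd := abs_add_slack_sub_le (hf e) h
  refine ⟨resist_le_sq_mul_resist (hf' e)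
    (inv_le_mul_inv_of_abs_sub_le_of_le_half hf_sub hf'_sub hη0 hη hsub)
    (inv_le_mul_inv_of_abs_sub_le_of_le_half hf_add hf'_add hη0 hη hadd),
    resist_le_sq_mul_resist (hf e) ?_ ?_⟩
  · exact (inv_le_mul_inv_of_abs_sub_le hf_sub hf'_sub hsub).trans (by gcongr; linarith)
  · exact (inv_le_mul_inv_of_abs_sub_le hf_add hf'_add hadd).trans (by gcongr; linarith)

theorem weightedNorm_barrierGrad_sub_sub_resist_mul_le (hf : ∀ e, |f e| < u e)
    (hf' : ∀ e, |f' e| < u e) (hη : η ≤ 1 / 2) (h : weightedNorm (resist u f) (f' - f) ≤ η) :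
    weightedNorm (resist u f)⁻¹
      (barrierGrad u f' - barrierGrad u f - resist u f * (f' - f)) ≤ 2 * η ^ 2 := by
  have hη0 : 0 ≤ η := (apply_nonneg _ _).trans h
  have hr (e) : 0 < resist u f e := resist_pos (hf e)
  have hlin : barrierGrad u f' - barrierGrad u f - resist u f * (f' - f)
      = resist u f * ((secantResist u f f' / resist u f - 1) * (f' - f)) := by
    ext e
    have := (hr e).ne'
    simp only [Pi.sub_apply, Pi.mul_apply, Pi.div_apply, Pi.one_apply,
      barrierGrad_sub_barrierGrad (hf e) (hf' e)]
    field_simp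
  have hratio (e) : |(secantResist u f f' / resist u f - 1) e| ≤ 2 * η := by
    rw [Pi.sub_apply, Pi.div_apply, Pi.one_apply, div_sub_one (hr e).ne', abs_div,
      abs_of_pos (hr e), div_le_iff₀ (hr e)]
    exact abs_secantResist_sub_resist_le (hf e) (hf' e) hη h
  calc _ = weightedNorm (resist u f) ((secantResist u f f' / resist u f - 1) * (f' - f)) := by
        rw [hlin, weightedNorm_inv_mul hr]
    _ ≤ 2 * η * weightedNorm (resist u f) (f' - f) :=
        weightedNorm_mul_le (by positivity) (fun e => (hr e).le) hratio _
    _ ≤ 2 * η * η := by gcongr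
    _ = 2 * η ^ 2 := by ring

theorem weightedNorm_inv_resist_barrierGrad_sub_le {γ : ℝ} {x : E → ℝ} (hf : ∀ e, |f e| < u e)
    (hf' : ∀ e, |f' e| < u e) (hη : η ≤ 1 / 2) (h : weightedNorm (resist u f) (f' - f) ≤ η)
    (hx : weightedNorm (resist u f)⁻¹ (barrierGrad u f - x) ≤ γ) :
    weightedNorm (resist u f')⁻¹ (barrierGrad u f' - x) ≤ (1 + 2 * η) * (γ + η + 2 * η ^ 2) := by
  have hη0 : 0 ≤ η := (apply_nonneg _ _).trans h
  have hr (e) : 0 < resist u f e := resist_pos (hf e)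
  have hr' (e) : 0 < resist u f' e := resist_pos (hf' e)
  have hwithin := withinFactor_resist_of_weightedNorm_le hf hf' hη h
  calc weightedNorm (resist u f')⁻¹ (barrierGrad u f' - x)
      ≤ (1 + 2 * η) * weightedNorm (resist u f)⁻¹ (barrierGrad u f' - x) :=
        weightedNorm_le_mul_of_le (by positivity) (fun e => (inv_pos.2 (hr' e)).le)
          (fun e => (inv_pos.2 (hr e)).le) (fun e => (hwithin.inv hr' hr e).1) _
    _ = (1 + 2 * η) * weightedNorm (resist u f)⁻¹ (barrierGrad u f - x + resist u f * (f' - f) +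
          (barrierGrad u f' - barrierGrad u f - resist u f * (f' - f))) := by congr 2; abel
    _ ≤ (1 + 2 * η) * (γ + η + 2 * η ^ 2) := by
        gcongr
        refine (map_add_le_add _ _ _).trans (add_le_add ((map_add_le_add _ _ _).trans
          (add_le_add hx ?_)) (weightedNorm_barrierGrad_sub_sub_resist_mul_le hf hf' hη h))
        rwa [weightedNorm_inv_mul hr]

theorem sum_secantResist_mul_sq (hf : ∀ e, |f e| < u e) (hf' : ∀ e, |f' e| < u e) :
    ∑ e, secantResist u f f' e * (f' - f) e ^ 2
      = (f' - f) ⬝ᵥ (barrierGrad u f' - barrierGrad u f) :=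
  Finset.sum_congr rfl fun e _ => by
    rw [Pi.sub_apply (barrierGrad u f'), barrierGrad_sub_barrierGrad (hf e) (hf' e), Pi.sub_apply]
    ring

theorem weightedNorm_sub_sq_le (hf : ∀ e, |f e| < u e) (hf' : ∀ e, |f' e| < u e)
    (h : weightedNorm (resist u f) (f' - f) ≤ η) :
    weightedNorm (resist u f) (f' - f) ^ 2
      ≤ (1 + η) * ((f' - f) ⬝ᵥ (barrierGrad u f' - barrierGrad u f)) := by
  rw [weightedNorm_sq fun e => (resist_pos (hf e)).le, ← sum_secantResist_mul_sq hf hf',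
    Finset.mul_sum]
  refine Finset.sum_le_sum fun e _ => ?_
  rw [← mul_assoc]
  gcongr
  exact resist_le_mul_secantResist (hf e) (hf' e) h

end Fintype

end Barrier

section CenteringError

variable {V E : Type*} [Fintype V] [Fintype E] {B : Matrix E V ℝ} {r r' : E → ℝ} {γ γ' : ℝ}
  {d d' : V → ℝ} {g g' : E → ℝ}

/-- Centering error at most `γ` in the geometry of the resistances `r`: the demand error `d` can be
routed by a flow of norm at most `γ`, and the gradient `g` is within dual distance `γ` of the
potential differences `B φ`. -/
structure HasCenteringErrorLE (B : Matrix E V ℝ) (r : E → ℝ) (γ : ℝ) (d : V → ℝ) (g : E → ℝ) :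
    Prop where
  demand : ∃ q, Bᵀ *ᵥ q = d ∧ weightedNorm r q ≤ γ
  gradient : ∃ φ, weightedNorm r⁻¹ (g - B *ᵥ φ) ≤ γ

theorem HasCenteringErrorLE.add (h : HasCenteringErrorLE B r γ d g)
    (h' : HasCenteringErrorLE B r γ' d' g') :
    HasCenteringErrorLE B r (γ + γ') (d + d') (g + g') := by
  obtain ⟨⟨q, hq, hqγ⟩, φ, hφ⟩ := h
  obtain ⟨⟨q', hq', hqγ'⟩, φ', hφ'⟩ := h'
  refine ⟨⟨q + q', by rw [mulVec_add, hq, hq'], (map_add_le_add _ _ _).trans (add_le_add hqγ hqγ')⟩,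
    φ + φ', ?_⟩
  rw [mulVec_add, add_sub_add_comm]
  exact (map_add_le_add _ _ _).trans (add_le_add hφ hφ')

theorem hasCenteringErrorLE_zero (φ : V → ℝ) : HasCenteringErrorLE B r 0 0 (B *ᵥ φ) where
  demand := ⟨0, by simp⟩
  gradient := ⟨φ, by simp⟩

theorem HasCenteringErrorLE.mono (h : HasCenteringErrorLE B r γ d g) (hγ : γ ≤ γ') :
    HasCenteringErrorLE B r γ' d g :=
  let ⟨⟨q, hq, hqγ⟩, φ, hφ⟩ := h
  ⟨⟨q, hq, hqγ.trans hγ⟩, φ, hφ.trans hγ⟩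

theorem HasCenteringErrorLE.of_withinFactor {ρ : ℝ} (hρ : 0 ≤ ρ) (hr : ∀ e, 0 < r e)
    (hr' : ∀ e, 0 < r' e) (hrr' : WithinFactor (ρ ^ 2) r' r) (h : HasCenteringErrorLE B r γ d g) :
    HasCenteringErrorLE B r' (ρ * γ) d g := by
  obtain ⟨⟨q, hq, hqγ⟩, φ, hφ⟩ := h
  have hinv := hrr'.inv hr' hr
  refine ⟨⟨q, hq, (weightedNorm_le_mul_of_le hρ (fun e => (hr' e).le) (fun e => (hr e).le)
    (fun e => (hrr' e).1) q).trans (by gcongr)⟩, φ, ?_⟩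
  exact (weightedNorm_le_mul_of_le (w := r'⁻¹) (w' := r⁻¹) hρ (fun e => (inv_pos.2 (hr' e)).le)
    (fun e => (inv_pos.2 (hr e)).le) (fun e => (hinv e).1) _).trans (by gcongr)

theorem HasCenteringErrorLE.of_forall_step {n : ℕ} {R : ℕ → E → ℝ} {D : ℕ → V → ℝ}
    {G : ℕ → E → ℝ} {ρ δ : ℝ} (hρ : 0 ≤ ρ) (hR : ∀ j ≤ n, ∀ e, 0 < R j e)
    (hRn : ∀ j < n, WithinFactor (ρ ^ 2) (R n) (R j)) (hD : D 0 = 0) (hG : ∃ φ, B *ᵥ φ = G 0)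
    (hstep : ∀ j < n, HasCenteringErrorLE B (R j) δ (D (j + 1) - D j) (G (j + 1) - G j)) :
    HasCenteringErrorLE B (R n) (n * (ρ * δ)) (D n) (G n) := by
  suffices ∀ j ≤ n, HasCenteringErrorLE B (R n) (j * (ρ * δ)) (D j) (G j) from this n le_rfl
  intro j
  induction j with
  | zero =>
    obtain ⟨φ, hφ⟩ := hG
    intro
    simpa [hD, hφ] using hasCenteringErrorLE_zero (B := B) (r := R n) φ
  | succ j ih =>
    intro hj
    have hinc := (hstep j hj).of_withinFactor hρ (hR j (by lia)) (hR n le_rfl) (hRn j hj)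
    convert (ih (by lia)).add hinc using 1
    · push_cast
      ring
    · abel
    · abel

end CenteringError

section Centrality

variable {V E : Type*} [Fintype V] [Fintype E] {B : Matrix E V ℝ} {u f f' h c : E → ℝ}
  {χ : V → ℝ} {F μ γ δ : ℝ}

/-- The flow `f` is strictly feasible and has centering error at most `γ` for the path parameter
`μ`, in the geometry of its own resistances. This is `IsCenteredFlow` with the demand error measured
by the flows routing it, which avoids the pseudoinverse of the Laplacian. -/
structure IsNearCentral (B : Matrix E V ℝ) (u : E → ℝ) (χ : V → ℝ) (F γ μ : ℝ) (f : E → ℝ) :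
    Prop where
  abs_lt : ∀ e, |f e| < u e
  error : HasCenteringErrorLE B (resist u f) γ (Bᵀ *ᵥ f - (F - μ) • χ) (barrierGrad u f)

theorem IsCentralFlow.exists_potential (hc : IsCentralFlow B u χ F μ c) :
    ∃ φ, B *ᵥ φ = barrierGrad u c :=
  hc.2.2.imp fun _ hφ => funext hφ

theorem IsCentralFlow.weightedNorm_sub_le_of_demand_eq (hc : IsCentralFlow B u χ F μ c)
    (hh : ∀ e, |h e| < u e) (hdem : Bᵀ *ᵥ h = (F - μ) • χ) {φ : V → ℝ}
    (hφ : weightedNorm (resist u h)⁻¹ (barrierGrad u h - B *ᵥ φ) ≤ δ) :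
    weightedNorm (resist u h) (c - h) ≤ δ * (1 + weightedNorm (resist u h) (c - h)) := by
  obtain ⟨ψ, hψ⟩ := hc.exists_potential
  have hr (e) : 0 < resist u h e := resist_pos (hh e)
  set Z := weightedNorm (resist u h) (c - h)
  have hZ0 : 0 ≤ Z := apply_nonneg _ _
  have circulation : Bᵀ *ᵥ (c - h) = 0 := by rw [mulVec_sub, hc.2.1, hdem, sub_self]
  have work_le : (c - h) ⬝ᵥ (barrierGrad u c - barrierGrad u h) ≤ δ * Z := by
    calc (c - h) ⬝ᵥ (barrierGrad u c - barrierGrad u h)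
        = (c - h) ⬝ᵥ B *ᵥ (ψ - φ) - (c - h) ⬝ᵥ (barrierGrad u h - B *ᵥ φ) := by
          rw [← dotProduct_sub, mulVec_sub, hψ, sub_sub_sub_cancel_right]
      _ = (barrierGrad u h - B *ᵥ φ) ⬝ᵥ (h - c) := by
          rw [← transpose_mulVec_dotProduct, circulation, zero_dotProduct, zero_sub,
            dotProduct_comm, ← dotProduct_neg, neg_sub]
      _ ≤ weightedNorm (resist u h)⁻¹ (barrierGrad u h - B *ᵥ φ)
            * weightedNorm (resist u h) (h - c) := dotProduct_le_weightedNorm_mul hr _ _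
      _ ≤ δ * Z := by
          rw [map_sub_rev (weightedNorm (resist u h)) h c]
          exact mul_le_mul_of_nonneg_right hφ hZ0
  have hZZ : Z * Z ≤ Z * (δ * (1 + Z)) := by
    calc Z * Z = Z ^ 2 := (sq Z).symm
      _ ≤ (1 + Z) * ((c - h) ⬝ᵥ (barrierGrad u c - barrierGrad u h)) :=
          weightedNorm_sub_sq_le hh hc.1 le_rfl
      _ ≤ (1 + Z) * (δ * Z) := by gcongr
      _ = Z * (δ * (1 + Z)) := by ring
  have hδ0 : 0 ≤ δ := (apply_nonneg _ _).trans hφ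
  rcases hZ0.eq_or_lt with hZ | hZ
  · rw [← hZ]
    positivity
  · exact le_of_mul_le_mul_left hZZ hZ

theorem IsNearCentral.weightedNorm_sub_le (h : IsNearCentral B u χ F γ μ f)
    (hc : IsCentralFlow B u χ F μ c) (hγ : γ ≤ 1 / 100) :
    weightedNorm (resist u f) (f - c) ≤ 4 * γ := by
  obtain ⟨hf, ⟨q, hq, hqγ⟩, φ, hφ⟩ := h
  have hγ0 : 0 ≤ γ := (apply_nonneg _ _).trans hqγ
  set h := f - q with hh_def
  have hhf : weightedNorm (resist u f) (h - f) ≤ γ := by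
    rwa [hh_def, sub_sub_cancel_left, map_neg_eq_map]
  have hh (e) : |h e| < u e := abs_lt_of_weightedNorm_sub_lt_one (hf e) (by linarith)
  have hr (e) : 0 < resist u f e := resist_pos (hf e)
  have hrh (e) : 0 < resist u h e := resist_pos (hh e)
  have hdem : Bᵀ *ᵥ h = (F - μ) • χ := by rw [hh_def, mulVec_sub, hq, sub_sub_cancel]
  have hwithin := withinFactor_resist_of_weightedNorm_le hf hh (by linarith) hhf
  have hZ := hc.weightedNorm_sub_le_of_demand_eq hh hdem
    (weightedNorm_inv_resist_barrierGrad_sub_le hf hh (by linarith) hhf hφ)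
  set Z := weightedNorm (resist u h) (c - h)
  have hZ0 : 0 ≤ Z := apply_nonneg _ _
  have hδ : (1 + 2 * γ) * (γ + γ + 2 * γ ^ 2) ≤ 2.1 * γ := by
    nlinarith [mul_nonneg hγ0 hγ0]
  have hZγ : Z ≤ 2.2 * γ := by
    nlinarith [mul_le_mul_of_nonneg_right hδ (by positivity : 0 ≤ 1 + Z), mul_nonneg hγ0 hZ0]
  calc weightedNorm (resist u f) (f - c)
      = weightedNorm (resist u f) (q + (h - c)) := by rw [hh_def]; congr 1; abel
    _ ≤ γ + (1 + 2 * γ) * Z := by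
        refine (map_add_le_add _ _ _).trans (add_le_add hqγ ?_)
        rw [map_sub_rev]
        exact weightedNorm_le_mul_of_le (by positivity) (fun e => (hr e).le)
          (fun e => (hrh e).le) (fun e => (hwithin e).2) _
    _ ≤ 4 * γ := by nlinarith

end Centrality

section Conclusion

variable {V E : Type*} [Fintype V] [Fintype E] {B : Matrix E V ℝ} {u f c : E → ℝ} {χ : V → ℝ}
  {F μ γ γ' : ℝ}

theorem IsCentralFlow.isNearCentral (hc : IsCentralFlow B u χ F μ c)
    (hγ : 0 ≤ γ) : IsNearCentral B u χ F γ μ c := by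
  obtain ⟨φ, hφ⟩ := hc.exists_potential
  refine ⟨hc.1, ?_⟩
  rw [hc.2.1, sub_self, ← hφ]
  exact (hasCenteringErrorLE_zero φ).mono hγ

theorem IsNearCentral.mono (h : IsNearCentral B u χ F γ μ f) (hγ : γ ≤ γ') :
    IsNearCentral B u χ F γ' μ f :=
  ⟨h.abs_lt, h.error.mono hγ⟩

theorem IsNearCentral.isCenteredFlow [DecidableEq V] [DecidableEq E]
    (h : IsNearCentral B u χ F γ μ f) : IsCenteredFlow B u χ F γ μ f := by
  obtain ⟨hf, ⟨q, hq, hqγ⟩, φ, hφ⟩ := h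
  have hr (e) : 0 < resist u f e := resist_pos (hf e)
  obtain ⟨Ld, hLd⟩ := exists_isMoorePenrose (resistanceLaplacian_isSymm B (resist u f))
  refine ⟨Ld, hLd, ?_, φ, ?_⟩
  · rw [← hq]
    exact (sqrt_dotProduct_pinv_mulVec_le hr hLd q).trans hqγ
  · rw [map_sub_rev, weightedNorm_eq_sqrt (w := (resist u f)⁻¹) fun e =>
      (inv_pos.2 (hr e)).le] at hφ
    exact hφ

theorem IsNearCentral.withinFactor_resist (h : IsNearCentral B u χ F γ μ f)
    (hc : IsCentralFlow B u χ F μ c) (hγ : γ ≤ 1 / 100) :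
    WithinFactor 1.2 (resist u f) (resist u c) := by
  have hclose : weightedNorm (resist u f) (c - f) ≤ 4 / 100 := by
    rw [map_sub_rev]
    linarith [h.weightedNorm_sub_le hc hγ]
  exact (withinFactor_resist_of_weightedNorm_le h.abs_lt hc.1 (by norm_num) hclose).symm.mono
    (fun e => (resist_pos (h.abs_lt e)).le) (fun e => (resist_pos (hc.1 e)).le) (by norm_num)

end Conclusion

section Step

variable {V E : Type*} [Fintype V] [Fintype E] [DecidableEq E] {B : Matrix E V ℝ}
  {u f f' r y g : E → ℝ} {χ : V → ℝ} {ε τ K : ℝ}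

theorem IsApproxElectricalFlow.exists_close (hg : IsApproxElectricalFlow B r χ ε g)
    (hr : ∀ e, 0 < r e) (hy : Bᵀ *ᵥ y = χ) (hyK : weightedNorm r y ≤ K) (hε : 0 < ε)
    (hε10 : ε ≤ 1 / 10) :
    ∃ g₀, IsElectricalFlow B r χ g₀ ∧ weightedNorm r g₀ ≤ K ∧
      weightedNorm r (g - g₀) ≤ 5 * ε * K := by
  obtain ⟨g₀, hg₀⟩ := hy ▸ exists_isElectricalFlow B hr y
  have hg₀K := (hg₀.weightedNorm_le hr hy).trans hyK
  exact ⟨g₀, hg₀, hg₀K, (hg.weightedNorm_sub_le hg₀ hr hε hε10).trans (by gcongr)⟩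

theorem IsApproxElectricalFlow.weightedNorm_smul_le (hg : IsApproxElectricalFlow B r χ ε g)
    (hr : ∀ e, 0 < r e) (hy : Bᵀ *ᵥ y = χ) (hyK : weightedNorm r y ≤ K) (hε : 0 < ε)
    (hε10 : ε ≤ 1 / 50) (hτ : 0 ≤ τ) (hτK : τ * K ≤ 10 * ε) :
    weightedNorm r (τ • g) ≤ 11 * ε := by
  obtain ⟨g₀, -, hg₀K, hsub⟩ := hg.exists_close hr hy hyK hε (by linarith)
  calc weightedNorm r (τ • g) = τ * weightedNorm r (g₀ + (g - g₀)) := by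
        rw [map_smul_eq_mul, Real.norm_of_nonneg hτ, add_sub_cancel]
    _ ≤ τ * (K + 5 * ε * K) := by
        gcongr
        exact (map_add_le_add _ _ _).trans (add_le_add hg₀K hsub)
    _ = (1 + 5 * ε) * (τ * K) := by ring
    _ ≤ (1 + 5 * ε) * (10 * ε) := by gcongr
    _ ≤ 11 * ε := by nlinarith

theorem IsApproxElectricalFlow.hasCenteringErrorLE
    (hg : IsApproxElectricalFlow B (resist u f) χ ε g) (hf : ∀ e, |f e| < u e)
    (hf' : ∀ e, |f' e| < u e) (hff' : f' = f + τ • g) (hy : Bᵀ *ᵥ y = χ)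
    (hyK : weightedNorm (resist u f) y ≤ K) (hε : 0 < ε) (hε50 : ε ≤ 1 / 50) (hτ : 0 ≤ τ)
    (hτK : τ * K ≤ 10 * ε) :
    HasCenteringErrorLE B (resist u f) (300 * ε ^ 2) (Bᵀ *ᵥ f' - Bᵀ *ᵥ f - τ • χ)
      (barrierGrad u f' - barrierGrad u f) := by
  have hr (e) : 0 < resist u f e := resist_pos (hf e)
  obtain ⟨g₀, ⟨hg₀dem, φ, hφ⟩, -, hsub⟩ := hg.exists_close hr hy hyK hε (by linarith)
  have hsub_smul : weightedNorm (resist u f) (τ • (g - g₀)) ≤ 50 * ε ^ 2 := by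
    calc weightedNorm (resist u f) (τ • (g - g₀)) ≤ τ * (5 * ε * K) := by
          rw [map_smul_eq_mul, Real.norm_of_nonneg hτ]
          gcongr
      _ = 5 * ε * (τ * K) := by ring
      _ ≤ 5 * ε * (10 * ε) := by gcongr
      _ = 50 * ε ^ 2 := by ring
  have hnear : weightedNorm (resist u f) (f' - f) ≤ 11 * ε := by
    rw [hff', add_sub_cancel_left]
    exact hg.weightedNorm_smul_le hr hy hyK hε hε50 hτ hτK
  refine ⟨⟨τ • (g - g₀), ?_, hsub_smul.trans (by gcongr; norm_num)⟩, τ • φ, ?_⟩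
  · rw [hff', mulVec_smul, mulVec_sub, hg₀dem, mulVec_add, mulVec_smul, smul_sub,
      add_sub_cancel_left]
  · calc weightedNorm (resist u f)⁻¹ (barrierGrad u f' - barrierGrad u f - B *ᵥ (τ • φ))
        = weightedNorm (resist u f)⁻¹ (barrierGrad u f' - barrierGrad u f
            - resist u f * (f' - f) + resist u f * (τ • (g - g₀))) := by
          rw [mulVec_smul, hφ, hff', add_sub_cancel_left, smul_sub, mul_sub, mul_smul_comm,
            mul_smul_comm, sub_add_sub_cancel]
      _ ≤ 2 * (11 * ε) ^ 2 + 50 * ε ^ 2 := by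
          refine (map_add_le_add _ _ _).trans (add_le_add
            (weightedNorm_barrierGrad_sub_sub_resist_mul_le hf hf' (by linarith) hnear) ?_)
          rwa [weightedNorm_inv_mul hr]
      _ ≤ 300 * ε ^ 2 := by nlinarith

end Step

section BarrierSlack

variable {E : Type*} {u f f' : E → ℝ} {e : E}

theorem inv_slack_le (u f : E → ℝ) (hf : |f e| < u e) :
    (u e - |f e|)⁻¹ ≤ |barrierGrad u f e| + (u e)⁻¹ := by
  have hu : 0 < u e := (abs_nonneg _).trans_lt hf
  unfold barrierGrad
  rcases abs_cases (f e) with ⟨h, h0⟩ | ⟨h, h0⟩ <;> rw [h]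
  · have : (u e + f e)⁻¹ ≤ (u e)⁻¹ := inv_anti₀ hu (by linarith)
    linarith [le_abs_self ((u e - f e)⁻¹ - (u e + f e)⁻¹)]
  · have : (u e - f e)⁻¹ ≤ (u e)⁻¹ := inv_anti₀ hu (by linarith)
    rw [sub_neg_eq_add]
    linarith [neg_abs_le ((u e - f e)⁻¹ - (u e + f e)⁻¹)]

theorem secantResist_le (hf : |f e| < u e) (hf' : |f' e| < u e) :
    secantResist u f f' e ≤ 2 * ((u e - |f e|)⁻¹ * (u e - |f' e|)⁻¹) := by
  have hs : 0 < u e - |f e| := sub_pos.2 hf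
  have hs' : 0 < u e - |f' e| := sub_pos.2 hf'
  have hsub : (u e - f e)⁻¹ * (u e - f' e)⁻¹ ≤ (u e - |f e|)⁻¹ * (u e - |f' e|)⁻¹ :=
    mul_le_mul (inv_anti₀ hs (by linarith [le_abs_self (f e)]))
      (inv_anti₀ hs' (by linarith [le_abs_self (f' e)]))
      (inv_pos.2 (sub_pos_of_abs_lt hf')).le (inv_pos.2 hs).le
  have hadd : (u e + f e)⁻¹ * (u e + f' e)⁻¹ ≤ (u e - |f e|)⁻¹ * (u e - |f' e|)⁻¹ :=
    mul_le_mul (inv_anti₀ hs (by linarith [neg_abs_le (f e)]))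
      (inv_anti₀ hs' (by linarith [neg_abs_le (f' e)]))
      (inv_pos.2 (add_pos_of_abs_lt hf')).le (inv_pos.2 hs).le
  unfold secantResist
  linarith

theorem inv_le_mul_inv_of_inv_mul_inv_mul_sq_le {a a' d T : ℝ} (ha : 0 < a) (ha' : 0 < a')
    (hd : d ^ 2 = (a' - a) ^ 2) (h : a⁻¹ * a'⁻¹ * d ^ 2 ≤ T) : a⁻¹ ≤ (T + 2) * a'⁻¹ := by
  rw [← mul_inv, inv_mul_le_iff₀ (by positivity), hd] at h
  rw [← div_eq_mul_inv, le_div_iff₀ ha', inv_mul_le_iff₀ ha]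
  refine le_of_mul_le_mul_left ?_ ha'
  nlinarith [sq_nonneg a]

theorem resist_le_of_secantResist_mul_sq_le {T : ℝ} (hf : |f e| < u e) (hf' : |f' e| < u e)
    (h : secantResist u f f' e * (f' - f) e ^ 2 ≤ T) :
    resist u f e ≤ (T + 2) ^ 2 * resist u f' e := by
  have hf_sub := sub_pos_of_abs_lt hf
  have hf_add := add_pos_of_abs_lt hf
  have hf'_sub := sub_pos_of_abs_lt hf'
  have hf'_add := add_pos_of_abs_lt hf'
  rw [secantResist, add_mul] at h
  have hsub_nonneg : 0 ≤ (u e - f e)⁻¹ * (u e - f' e)⁻¹ * (f' - f) e ^ 2 := by positivity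
  have hadd_nonneg : 0 ≤ (u e + f e)⁻¹ * (u e + f' e)⁻¹ * (f' - f) e ^ 2 := by positivity
  refine resist_le_sq_mul_resist hf
    (inv_le_mul_inv_of_inv_mul_inv_mul_sq_le (d := (f' - f) e) hf_sub hf'_sub ?_ (by linarith))
    (inv_le_mul_inv_of_inv_mul_inv_mul_sq_le (d := (f' - f) e) hf_add hf'_add ?_ (by linarith)) <;>
  · rw [Pi.sub_apply]
    ring

theorem secantResist_comm (u f f' : E → ℝ) : secantResist u f f' = secantResist u f' f := by
  ext e
  simp only [secantResist, mul_comm]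

theorem withinFactor_resist_of_secantResist_mul_sq_le {T : ℝ} (hf : ∀ e, |f e| < u e)
    (hf' : ∀ e, |f' e| < u e) (h : ∀ e, secantResist u f f' e * (f' - f) e ^ 2 ≤ T) :
    WithinFactor ((T + 2) ^ 2) (resist u f) (resist u f') := fun e =>
  ⟨resist_le_of_secantResist_mul_sq_le (hf e) (hf' e) (h e),
    resist_le_of_secantResist_mul_sq_le (hf' e) (hf e) (by
      rw [secantResist_comm, ← neg_sub f' f, Pi.neg_apply, neg_sq]
      exact h e)⟩

end BarrierSlack

section Preconditioning

variable {V E : Type*} [Fintype V] [Fintype E]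

/-- The edges `P` precondition the problem of routing multiples of `χ`: they make up at least half
of all edges, each of them is parallel to `χ` (in either direction) and has maximum capacity, and
some potential separates the terminals of `χ` by a full unit while changing by at most one unit
along any edge. -/
structure IsPreconditioner (B : Matrix E V ℝ) (χ : V → ℝ) (u : E → ℝ) (P : Finset E) : Prop where
  row_eq : ∀ p ∈ P, B p = χ ∨ B p = -χ
  capacity_le : ∀ p ∈ P, ∀ e, u e ≤ u p
  card_le : Fintype.card E ≤ 2 * P.card
  exists_cut : ∃ x, χ ⬝ᵥ x = 1 ∧ ∀ e, |(B *ᵥ x) e| ≤ 1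

variable {B : Matrix E V ℝ} {χ : V → ℝ} {u f f' g : E → ℝ} {P : Finset E} {F μ μ' : ℝ} {p : E}

theorem dotProduct_potential_le {φ : V → ℝ} (hf : ∀ e, |f e| < u e) (hφ : B *ᵥ φ = barrierGrad u f)
    (hg : ∀ e, |g e| ≤ u e) : (Bᵀ *ᵥ (g - f)) ⬝ᵥ φ ≤ 2 * Fintype.card E := by
  have edge_le (e) : (g - f) e * barrierGrad u f e ≤ 2 := by
    have hsub : (g e - f e) * (u e - f e)⁻¹ ≤ 1 := by
      rw [← div_eq_mul_inv, div_le_one (sub_pos_of_abs_lt (hf e))]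
      linarith [(abs_le.1 (hg e)).2]
    have hadd : -(g e - f e) * (u e + f e)⁻¹ ≤ 1 := by
      rw [← div_eq_mul_inv, div_le_one (add_pos_of_abs_lt (hf e))]
      linarith [(abs_le.1 (hg e)).1]
    rw [Pi.sub_apply, barrierGrad]
    linarith
  calc (Bᵀ *ᵥ (g - f)) ⬝ᵥ φ = ∑ e, (g - f) e * barrierGrad u f e := by
        rw [transpose_mulVec_dotProduct, hφ, dotProduct]
    _ ≤ ∑ _e : E, (2 : ℝ) := Finset.sum_le_sum fun e _ => edge_le e
    _ = 2 * Fintype.card E := by simp [mul_comm]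

theorem IsCentralFlow.abs_dotProduct_potential_le (hf : IsCentralFlow B u χ F μ f) {φ : V → ℝ}
    (hφ : B *ᵥ φ = barrierGrad u f) (hg : ∀ e, |g e| ≤ u e) (hgF : Bᵀ *ᵥ g = F • χ) (hμ : 0 < μ)
    (hμF : μ ≤ F) : |χ ⬝ᵥ φ| ≤ 2 * Fintype.card E / μ := by
  have hforward := dotProduct_potential_le hf.1 hφ hg
  have hbackward := dotProduct_potential_le (g := -g) hf.1 hφ (by simpa using hg)
  rw [mulVec_sub, hgF, hf.2.1, ← sub_smul, smul_dotProduct, smul_eq_mul] at hforward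
  rw [mulVec_sub, mulVec_neg, hgF, hf.2.1, ← neg_smul, ← sub_smul, smul_dotProduct,
    smul_eq_mul] at hbackward
  rw [le_div_iff₀ hμ]
  rcases abs_cases (χ ⬝ᵥ φ) with ⟨h, h0⟩ | ⟨h, h0⟩ <;> rw [h] <;> nlinarith [h0]

theorem IsPreconditioner.le_card_mul_capacity (hP : IsPreconditioner B χ u P) (hp : p ∈ P)
    (hg : ∀ e, |g e| ≤ u e) (hgF : Bᵀ *ᵥ g = F • χ) : F ≤ Fintype.card E * u p := by
  obtain ⟨x, hx, hBx⟩ := hP.exists_cut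
  calc F = (Bᵀ *ᵥ g) ⬝ᵥ x := by rw [hgF, smul_dotProduct, hx, smul_eq_mul, mul_one]
    _ = ∑ e, g e * (B *ᵥ x) e := transpose_mulVec_dotProduct B g x
    _ ≤ ∑ _e : E, u p := by
        refine Finset.sum_le_sum fun e _ => (le_abs_self _).trans ?_
        rw [abs_mul]
        exact (mul_le_of_le_one_right (abs_nonneg _) (hBx e)).trans
          ((hg e).trans (hP.capacity_le p hp e))
    _ = Fintype.card E * u p := by simp

theorem IsPreconditioner.inv_slack_le_card_div (hP : IsPreconditioner B χ u P) (hp : p ∈ P)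
    (hf : IsCentralFlow B u χ F μ f) (hg : ∀ e, |g e| ≤ u e) (hgF : Bᵀ *ᵥ g = F • χ)
    (hμ : 0 < μ) (hμF : μ ≤ F) : (u p - |f p|)⁻¹ ≤ 3 * Fintype.card E / μ := by
  obtain ⟨φ, hφ⟩ := hf.exists_potential
  have hu : 0 < u p := (abs_nonneg _).trans_lt (hf.1 p)
  have hgrad : |barrierGrad u f p| ≤ 2 * Fintype.card E / μ := by
    have habs : |(B *ᵥ φ) p| = |χ ⬝ᵥ φ| := by
      rw [mulVec]
      rcases hP.row_eq p hp with h | h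
      · rw [h]
      · rw [h, neg_dotProduct, abs_neg]
    rw [← hφ, habs]
    exact hf.abs_dotProduct_potential_le hφ hg hgF hμ hμF
  have hcap : (u p)⁻¹ ≤ Fintype.card E / μ := by
    rw [inv_eq_one_div, div_le_div_iff₀ hu hμ, one_mul]
    exact hμF.trans (hP.le_card_mul_capacity hp hg hgF)
  calc (u p - |f p|)⁻¹ ≤ |barrierGrad u f p| + (u p)⁻¹ := inv_slack_le u f (hf.1 p)
    _ ≤ 2 * Fintype.card E / μ + Fintype.card E / μ := add_le_add hgrad hcap
    _ = 3 * Fintype.card E / μ := by ring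

theorem IsPreconditioner.exists_unit_flow [Nonempty E] (hP : IsPreconditioner B χ u P)
    {w : E → ℝ} {M : ℝ} (hw : ∀ e, 0 ≤ w e) (hwM : ∀ p ∈ P, w p ≤ M) :
    ∃ y, Bᵀ *ᵥ y = χ ∧ weightedNorm w y ^ 2 ≤ 2 * M / Fintype.card E := by
  classical
  have hm : 0 < (Fintype.card E : ℝ) := by exact_mod_cast Fintype.card_pos
  have hmP : (Fintype.card E : ℝ) ≤ 2 * P.card := by exact_mod_cast hP.card_le
  have hPpos : 0 < (P.card : ℝ) := by linarith
  let σ (e : E) : ℝ := if B e = χ then 1 else -1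
  have hσ {p} (hp : p ∈ P) (v : V) : B p v * σ p = χ v := by
    by_cases h : B p = χ
    · simp [σ, h]
    · simp only [σ, if_neg h]
      simp [(hP.row_eq p hp).resolve_left h]
  have hσ_sq (e) : σ e ^ 2 = 1 := by by_cases h : B e = χ <;> simp [σ, h]
  refine ⟨fun e => if e ∈ P then σ e / P.card else 0, ?_, ?_⟩
  · ext v
    calc ∑ e, B e v * (if e ∈ P then σ e / P.card else 0)
        = ∑ p ∈ P, B p v * (σ p / P.card) := by simp [Finset.sum_ite_mem]
      _ = ∑ _p ∈ P, χ v / P.card := Finset.sum_congr rfl fun p hp => by rw [← hσ hp v]; ring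
      _ = χ v := by simp; field_simp
  · calc weightedNorm w _ ^ 2 = ∑ p ∈ P, w p * (σ p / P.card) ^ 2 := by
          simp [weightedNorm_sq hw, Finset.sum_ite_mem, ite_pow]
      _ ≤ ∑ _p ∈ P, M * (1 / P.card) ^ 2 := Finset.sum_le_sum fun p hp => by
          rw [div_pow, div_pow, hσ_sq, one_pow]
          exact mul_le_mul_of_nonneg_right (hwM p hp) (by positivity)
      _ = M / P.card := by simp; field_simp
      _ ≤ 2 * M / Fintype.card E := by
          obtain ⟨p, hp⟩ := Finset.card_pos.1 (by exact_mod_cast hPpos : 0 < P.card)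
          rw [div_le_div_iff₀ hPpos hm]
          nlinarith [(hw p).trans (hwM p hp)]

theorem IsCentralFlow.isElectricalFlow_sub (hf : IsCentralFlow B u χ F μ f)
    (hf' : IsCentralFlow B u χ F μ' f') :
    IsElectricalFlow B (secantResist u f f') ((μ - μ') • χ) (f' - f) := by
  obtain ⟨φ, hφ⟩ := hf.exists_potential
  obtain ⟨φ', hφ'⟩ := hf'.exists_potential
  refine ⟨?_, φ' - φ, ?_⟩
  · rw [mulVec_sub, hf.2.1, hf'.2.1, ← sub_smul, sub_sub_sub_cancel_left]
  · ext e
    rw [mulVec_sub, hφ, hφ', Pi.sub_apply, barrierGrad_sub_barrierGrad (hf.1 e) (hf'.1 e)]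
    rfl

theorem IsPreconditioner.weightedNorm_secantResist_sub_sq_le [Nonempty E]
    (hP : IsPreconditioner B χ u P) (hg : ∀ e, |g e| ≤ u e) (hgF : Bᵀ *ᵥ g = F • χ)
    (hf : IsCentralFlow B u χ F μ f) (hμ : 0 < μ) (hμF : μ ≤ F)
    (hf' : IsCentralFlow B u χ F μ' f') (hμ' : 0 < μ') (hμF' : μ' ≤ F) :
    weightedNorm (secantResist u f f') (f' - f) ^ 2
      ≤ 36 * Fintype.card E * (μ - μ') ^ 2 / (μ * μ') := by
  have hs (e) : 0 < secantResist u f f' e := secantResist_pos (hf.1 e) (hf'.1 e)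
  obtain ⟨y, hy, hyM⟩ := hP.exists_unit_flow (w := secantResist u f f')
    (M := 2 * (3 * Fintype.card E / μ * (3 * Fintype.card E / μ'))) (fun e => (hs e).le)
    fun p hp => (secantResist_le (hf.1 p) (hf'.1 p)).trans <| by
      have hslack : 0 ≤ (u p - |f' p|)⁻¹ := (inv_pos.2 (sub_pos.2 (hf'.1 p))).le
      gcongr
      · exact hP.inv_slack_le_card_div hp hf hg hgF hμ hμF
      · exact hP.inv_slack_le_card_div hp hf' hg hgF hμ' hμF'
  have hthomson := (hf.isElectricalFlow_sub hf').weightedNorm_le hs (y := (μ - μ') • y)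
    (by rw [mulVec_smul, hy])
  have hm : (Fintype.card E : ℝ) ≠ 0 := by exact_mod_cast Fintype.card_ne_zero
  calc weightedNorm (secantResist u f f') (f' - f) ^ 2
      ≤ weightedNorm (secantResist u f f') ((μ - μ') • y) ^ 2 := by gcongr
    _ = (μ - μ') ^ 2 * weightedNorm (secantResist u f f') y ^ 2 := by
        rw [map_smul_eq_mul, mul_pow, Real.norm_eq_abs, sq_abs]
    _ ≤ (μ - μ') ^ 2 * (2 * (2 * (3 * Fintype.card E / μ * (3 * Fintype.card E / μ')))
          / Fintype.card E) := by gcongr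
    _ = 36 * Fintype.card E * (μ - μ') ^ 2 / (μ * μ') := by
        field_simp
        ring

theorem IsPreconditioner.withinFactor_resist [Nonempty E] {k μ₀ : ℝ}
    (hP : IsPreconditioner B χ u P) (hg : ∀ e, |g e| ≤ u e) (hgF : Bᵀ *ᵥ g = F • χ)
    (hf : IsCentralFlow B u χ F μ f) (hμF : μ ≤ F) (hf' : IsCentralFlow B u χ F μ' f')
    (hμF' : μ' ≤ F) (hμ₀ : 0 < μ₀) (hμ : 0.9 * μ₀ ≤ μ) (hμ' : 0.9 * μ₀ ≤ μ') (hk : 1 ≤ k)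
    (hμμ' : |μ - μ'| ≤ k * μ₀ / √(Fintype.card E)) :
    WithinFactor ((47 * k ^ 2) ^ 2) (resist u f) (resist u f') := by
  have hμ_pos : 0 < μ := by linarith
  have hμ_pos' : 0 < μ' := by linarith
  have hm : 0 < (Fintype.card E : ℝ) := by exact_mod_cast Fintype.card_pos
  have hs (e) : 0 < secantResist u f f' e := secantResist_pos (hf.1 e) (hf'.1 e)
  have hdiff : Fintype.card E * (μ - μ') ^ 2 ≤ k ^ 2 * μ₀ ^ 2 := by
    have h := pow_le_pow_left₀ (abs_nonneg _) hμμ' 2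
    rw [sq_abs, div_pow, Real.sq_sqrt hm.le, le_div_iff₀ hm] at h
    linarith
  have henergy : weightedNorm (secantResist u f f') (f' - f) ^ 2 ≤ 45 * k ^ 2 := by
    refine (hP.weightedNorm_secantResist_sub_sq_le hg hgF hf hμ_pos hμF hf' hμ_pos' hμF').trans ?_
    have hμμ₀ : 0.81 * μ₀ ^ 2 ≤ μ * μ' := by nlinarith
    rw [div_le_iff₀ (by positivity)]
    nlinarith [mul_le_mul_of_nonneg_left hμμ₀ (sq_nonneg k)]
  refine (withinFactor_resist_of_secantResist_mul_sq_le hf.1 hf'.1 (T := 45 * k ^ 2)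
    fun e => ?_).mono (fun e => (resist_pos (hf.1 e)).le) (fun e => (resist_pos (hf'.1 e)).le)
    (by gcongr; nlinarith)
  rw [weightedNorm_sq fun e => (hs e).le] at henergy
  exact (Finset.single_le_sum (f := fun e => secantResist u f f' e * (f' - f) e ^ 2)
    (fun e _ => mul_nonneg (hs e).le (sq_nonneg _)) (Finset.mem_univ e)).trans henergy

theorem IsPreconditioner.withinFactor_resist_of_isNearCentral [Nonempty E] {γ k μ₀ : ℝ}
    {c c' : E → ℝ} (hP : IsPreconditioner B χ u P) (hg : ∀ e, |g e| ≤ u e)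
    (hgF : Bᵀ *ᵥ g = F • χ) (hf : IsNearCentral B u χ F γ μ f)
    (hc : IsCentralFlow B u χ F μ c) (hμF : μ ≤ F) (hγ : γ ≤ 1 / 100)
    (hf' : IsNearCentral B u χ F γ μ' f') (hc' : IsCentralFlow B u χ F μ' c')
    (hμF' : μ' ≤ F) (hμ₀ : 0 < μ₀) (hμ : 0.9 * μ₀ ≤ μ) (hμ' : 0.9 * μ₀ ≤ μ') (hk : 1 ≤ k)
    (hμμ' : |μ - μ'| ≤ k * μ₀ / √(Fintype.card E)) :
    WithinFactor ((60 * k ^ 2) ^ 2) (resist u f) (resist u f') := by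
  have hcc' := hP.withinFactor_resist hg hgF hc hμF hc' hμF' hμ₀ hμ hμ' hk hμμ'
  refine (((hf.withinFactor_resist hc hγ).trans (by positivity) (by positivity)
    hcc').trans (by positivity) (by positivity)
    (hf'.withinFactor_resist hc' hγ).symm).mono
    (fun e => (resist_pos (hf.abs_lt e)).le) (fun e => (resist_pos (hf'.abs_lt e)).le) ?_
  nlinarith [sq_nonneg (k ^ 2)]

theorem IsPreconditioner.exists_unit_flow_weightedNorm_le [Nonempty E] {c : E → ℝ} {μ₀ : ℝ}
    (hP : IsPreconditioner B χ u P) (hg : ∀ e, |g e| ≤ u e) (hgF : Bᵀ *ᵥ g = F • χ)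
    (hc : IsCentralFlow B u χ F μ c) (hμF : μ ≤ F) (hμ₀ : 0 < μ₀) (hμ : 0.9 * μ₀ ≤ μ)
    (hf : ∀ e, |f e| < u e) (hfc : WithinFactor 1.2 (resist u f) (resist u c)) :
    ∃ y, Bᵀ *ᵥ y = χ ∧ weightedNorm (resist u f) y ≤ 10 * √(Fintype.card E) / μ₀ := by
  have hμ_pos : 0 < μ := by linarith
  have hm : 0 < (Fintype.card E : ℝ) := by exact_mod_cast Fintype.card_pos
  have resist_le : ∀ p ∈ P, resist u f p ≤ 1.2 * (2 * (3 * Fintype.card E / μ) ^ 2) := by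
    intro p hp
    have hslack : 0 ≤ (u p - |c p|)⁻¹ := (inv_pos.2 (sub_pos.2 (hc.1 p))).le
    refine (hfc p).1.trans ?_
    rw [← secantResist_self]
    gcongr
    refine (secantResist_le (hc.1 p) (hc.1 p)).trans ?_
    rw [sq]
    gcongr <;> exact hP.inv_slack_le_card_div hp hc hg hgF hμ_pos hμF
  obtain ⟨y, hy, hyM⟩ := hP.exists_unit_flow (fun e => (resist_pos (hf e)).le) resist_le
  refine ⟨y, hy, le_of_sq_le_sq (hyM.trans ?_) (by positivity)⟩
  calc 2 * (1.2 * (2 * (3 * Fintype.card E / μ) ^ 2)) / Fintype.card E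
      = 43.2 * Fintype.card E / μ ^ 2 := by field_simp; norm_num
    _ ≤ 43.2 * Fintype.card E / (0.9 * μ₀) ^ 2 := by gcongr
    _ ≤ 10 ^ 2 * Fintype.card E / μ₀ ^ 2 := by
        rw [div_le_div_iff₀ (by positivity) (by positivity)]
        nlinarith [mul_pos hm (pow_pos hμ₀ 2)]
    _ = (10 * √(Fintype.card E) / μ₀) ^ 2 := by rw [div_pow, mul_pow, Real.sq_sqrt hm.le]

end Preconditioning

section PathParam

variable {m μ k ε : ℝ} {i j : ℕ}

/-- The path parameter `μ⁽ⁱ⁾` reached from `μ` after `i` damped steps of size `ε` on a graph with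
`m` edges. -/
noncomputable def pathParam (m μ ε : ℝ) (i : ℕ) : ℝ := μ - i * ε / √m * μ

theorem pathParam_sub_pathParam (m μ ε : ℝ) (i j : ℕ) :
    pathParam m μ ε i - pathParam m μ ε j = (j - i) * ε * (μ / √m) := by
  unfold pathParam
  ring

theorem abs_pathParam_sub_le (hμ : 0 ≤ μ) (hε : 0 < ε) (hi : i ≤ k / ε) (hj : j ≤ k / ε) :
    |pathParam m μ ε i - pathParam m μ ε j| ≤ k * μ / √m := by
  rw [le_div_iff₀ hε] at hi hj
  have hiε : 0 ≤ i * ε := by positivity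
  have hjε : 0 ≤ j * ε := by positivity
  rw [pathParam_sub_pathParam, abs_mul, abs_of_nonneg (by positivity : 0 ≤ μ / √m), mul_div_assoc]
  gcongr
  rw [sub_mul, abs_le]
  constructor <;> linarith

theorem pathParam_le (hμ : 0 ≤ μ) (hε : 0 ≤ ε) : pathParam m μ ε i ≤ μ :=
  sub_le_self μ (by positivity)

theorem mul_le_pathParam (hμ : 0 ≤ μ) (hm : 0 < √m) (hkm : k ≤ √m / 10) (hε : 0 < ε)
    (hi : i ≤ k / ε) : 0.9 * μ ≤ pathParam m μ ε i := by
  rw [le_div_iff₀ hε] at hi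
  have hle : i * ε / √m ≤ 0.1 := by
    rw [div_le_iff₀ hm]
    linarith
  unfold pathParam
  nlinarith

end PathParam

section Trajectory

variable {V E : Type*} [Fintype V] [Fintype E] [DecidableEq E] {B : Matrix E V ℝ}
  {χ : V → ℝ} {u g : E → ℝ} {P : Finset E} {F γ μ k ε : ℝ}

/-- The iterates `f` of the damped electrical flow method, started at the central flow with path
parameter `μ` and run for `k / ε` steps of size `ε` with `ε`-approximate electrical flows, together
with the central flows `fc` that they are meant to track. -/
structure IsDampedTrajectory (B : Matrix E V ℝ) (u : E → ℝ) (χ : V → ℝ) (F μ k ε : ℝ)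
    (f fc : ℕ → E → ℝ) : Prop where
  isCentralFlow : ∀ i : ℕ, i ≤ k / ε →
    IsCentralFlow B u χ F (pathParam (Fintype.card E) μ ε i) (fc i)
  zero_eq : f 0 = fc 0
  exists_step : ∀ i : ℕ, i < k / ε → ∃ v, IsApproxElectricalFlow B (resist u (f i)) χ ε v ∧
    f (i + 1) = f i + (ε * μ / √(Fintype.card E)) • v

variable {f fc : ℕ → E → ℝ} {i : ℕ}

theorem IsDampedTrajectory.step [Nonempty E] (h : IsDampedTrajectory B u χ F μ k ε f fc)
    (hP : IsPreconditioner B χ u P) (hg : ∀ e, |g e| ≤ u e) (hgF : Bᵀ *ᵥ g = F • χ)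
    (hμ : 0 < μ) (hμF : μ ≤ F) (hkm : k ≤ √(Fintype.card E) / 10) (hε : 0 < ε)
    (hε50 : ε ≤ 1 / 50) (hi : i < k / ε)
    (hγ : γ ≤ 1 / 100)
    (hfi : IsNearCentral B u χ F γ (pathParam (Fintype.card E) μ ε i) (f i)) :
    (∀ e, |f (i + 1) e| < u e) ∧ WithinFactor 2.25 (resist u (f (i + 1))) (resist u (f i)) ∧
      HasCenteringErrorLE B (resist u (f i)) (300 * ε ^ 2)
        (Bᵀ *ᵥ f (i + 1) - (F - pathParam (Fintype.card E) μ ε (i + 1)) • χ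
          - (Bᵀ *ᵥ f i - (F - pathParam (Fintype.card E) μ ε i) • χ))
        (barrierGrad u (f (i + 1)) - barrierGrad u (f i)) := by
  have hm : 0 < √(Fintype.card E : ℝ) := Real.sqrt_pos.2 (by exact_mod_cast Fintype.card_pos)
  have hc := h.isCentralFlow i hi.le
  obtain ⟨y, hy, hyK⟩ := hP.exists_unit_flow_weightedNorm_le hg hgF hc
    ((pathParam_le hμ.le hε.le).trans hμF) hμ (mul_le_pathParam hμ.le hm hkm hε hi.le)
    hfi.abs_lt (hfi.withinFactor_resist hc hγ)
  obtain ⟨v, hv, hfv⟩ := h.exists_step i hi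
  have hτ : 0 ≤ ε * μ / √(Fintype.card E : ℝ) := by positivity
  have hτK : ε * μ / √(Fintype.card E : ℝ) * (10 * √(Fintype.card E : ℝ) / μ) ≤ 10 * ε := by
    apply le_of_eq
    field_simp
  have hstep_le : weightedNorm (resist u (f i)) (f (i + 1) - f i) ≤ 11 * ε := by
    rw [hfv, add_sub_cancel_left]
    exact hv.weightedNorm_smul_le (fun e => resist_pos (hfi.abs_lt e)) hy hyK hε hε50 hτ hτK
  have hfeas (e) : |f (i + 1) e| < u e :=
    abs_lt_of_weightedNorm_sub_lt_one (hfi.abs_lt e) (by linarith)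
  refine ⟨hfeas, (withinFactor_resist_of_weightedNorm_le hfi.abs_lt hfeas (by linarith)
    hstep_le).mono (fun e => (resist_pos (hfeas e)).le)
    (fun e => (resist_pos (hfi.abs_lt e)).le) (by nlinarith), ?_⟩
  convert hv.hasCenteringErrorLE hfi.abs_lt hfeas hfv hy hyK hε hε50 hτ hτK using 1
  have hparam := pathParam_sub_pathParam (Fintype.card E) μ ε i (i + 1)
  rw [Nat.cast_succ, add_sub_cancel_left, one_mul, ← mul_div_assoc] at hparam
  rw [← hparam]
  module

theorem IsDampedTrajectory.isNearCentral_succ [Nonempty E] {n : ℕ}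
    (h : IsDampedTrajectory B u χ F μ k ε f fc) (hP : IsPreconditioner B χ u P)
    (hg : ∀ e, |g e| ≤ u e) (hgF : Bᵀ *ᵥ g = F • χ) (hμ : 0 < μ) (hμF : μ ≤ F) (hk : 1 ≤ k)
    (hkm : k ≤ √(Fintype.card E) / 10) (hε : 0 < ε) (hε50 : ε ≤ 1 / 50) (hγ : γ ≤ 1 / 100)
    (hn : (n + 1 : ℕ) ≤ k / ε)
    (hnear : ∀ j ≤ n, IsNearCentral B u χ F γ (pathParam (Fintype.card E) μ ε j) (f j)) :
    IsNearCentral B u χ F (27000 * k ^ 3 * ε) (pathParam (Fintype.card E) μ ε (n + 1))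
      (f (n + 1)) := by
  have hm : 0 < √(Fintype.card E : ℝ) := Real.sqrt_pos.2 (by exact_mod_cast Fintype.card_pos)
  have hlt {j} (hj : j ≤ n) : (j : ℝ) < k / ε :=
    (Nat.cast_lt.2 (Nat.lt_succ_of_le hj)).trans_le hn
  have hstep {j} (hj : j ≤ n) := h.step hP hg hgF hμ hμF hkm hε hε50 (hlt hj) hγ (hnear j hj)
  have hfeas : ∀ j ≤ n + 1, ∀ e, |f j e| < u e := fun j hj => (Nat.le_or_eq_of_le_succ hj).elim
    (fun hj => (hnear j hj).abs_lt) (fun hj => hj ▸ (hstep le_rfl).1)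
  have hparam {j} (hj : j ≤ n) := mul_le_pathParam hμ.le hm hkm hε (hlt hj).le
  have hle {j} : pathParam (Fintype.card E) μ ε j ≤ F := (pathParam_le hμ.le hε.le).trans hμF
  have hwithin : ∀ j < n + 1,
      WithinFactor ((90 * k ^ 2) ^ 2) (resist u (f (n + 1))) (resist u (f j)) := by
    intro j hj
    have hj := Nat.le_of_lt_succ hj
    convert (hstep le_rfl).2.1.trans (by norm_num) (by positivity)
      (hP.withinFactor_resist_of_isNearCentral hg hgF (hnear n le_rfl)
        (h.isCentralFlow n (hlt le_rfl).le) hle hγ (hnear j hj)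
        (h.isCentralFlow j (hlt hj).le) hle hμ (hparam le_rfl) (hparam hj) hk
        (abs_pathParam_sub_le hμ.le hε (hlt le_rfl).le (hlt hj).le)) using 1
    ring
  have hc := h.zero_eq ▸ h.isCentralFlow 0 (hlt (Nat.zero_le n)).le
  refine ⟨hfeas _ le_rfl, (HasCenteringErrorLE.of_forall_step (by positivity)
    (R := fun j => resist u (f j)) (G := fun j => barrierGrad u (f j))
    (D := fun j => Bᵀ *ᵥ f j - (F - pathParam (Fintype.card E) μ ε j) • χ)
    (fun j hj e => resist_pos (hfeas j hj e)) hwithin (sub_eq_zero.2 hc.2.1) hc.exists_potential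
    fun j hj => (hstep (Nat.le_of_lt_succ hj)).2.2).mono ?_⟩
  rw [le_div_iff₀ hε] at hn
  calc (n + 1 : ℕ) * (90 * k ^ 2 * (300 * ε ^ 2))
      = 27000 * k ^ 2 * ε * ((n + 1 : ℕ) * ε) := by ring
    _ ≤ 27000 * k ^ 2 * ε * k := by gcongr
    _ = 27000 * k ^ 3 * ε := by ring

theorem IsDampedTrajectory.isNearCentral [Nonempty E] (h : IsDampedTrajectory B u χ F μ k ε f fc)
    (hP : IsPreconditioner B χ u P) (hg : ∀ e, |g e| ≤ u e) (hgF : Bᵀ *ᵥ g = F • χ)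
    (hμ : 0 < μ) (hμF : μ ≤ F) (hk : 1 ≤ k) (hkm : k ≤ √(Fintype.card E) / 10) (hε : 0 < ε)
    (hεk : ε ≤ 1 / 10 ^ 8 / k ^ 3) (hi : i ≤ k / ε) :
    IsNearCentral B u χ F (1 / 1000) (pathParam (Fintype.card E) μ ε i) (f i) := by
  have hkε : k ^ 3 * ε ≤ 1 / 10 ^ 8 := by rwa [le_div_iff₀' (by positivity)] at hεk
  have hε50 : ε ≤ 1 / 50 := by nlinarith [one_le_pow₀ hk (n := 3)]
  induction i using Nat.strong_induction_on with
  | _ n ih =>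
  obtain _ | n := n
  · rw [h.zero_eq]
    exact (h.isCentralFlow 0 hi).isNearCentral (by norm_num)
  · refine (h.isNearCentral_succ hP hg hgF hμ hμF hk hkm hε hε50 (γ := 1 / 1000) (by norm_num) hi
      fun j hj => ?_).mono (by linarith)
    exact ih j (Nat.lt_succ_of_le hj)
      ((Nat.cast_le.2 (hj.trans n.le_succ)).trans hi)

end Trajectory

section MainTheorem

theorem Preconditioned.isPreconditioner {V E : Type*} [Fintype V] [Fintype E] [DecidableEq V]
    {head tail : E → V} {s t : V} {u : E → ℝ} {U : ℝ} {P : Finset E} {B : Matrix E V ℝ}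
    {χ : V → ℝ} (h : Preconditioned head tail s t u U P) (hst : s ≠ t)
    (hB : ∀ e v, B e v = (if v = head e then (1 : ℝ) else 0) - (if v = tail e then 1 else 0))
    (hχ : χ = fun v => (if v = t then (1 : ℝ) else 0) - (if v = s then 1 else 0)) :
    IsPreconditioner B χ u P := by
  obtain ⟨hU, hP, hnotP, hcard⟩ := h
  refine ⟨fun p hp => ?_, fun p hp e => ?_, hcard, Pi.single t 1, ?_, fun e => ?_⟩
  · obtain ⟨-, ⟨hhead, htail⟩ | ⟨hhead, htail⟩⟩ := hP p hp
    · exact Or.inr (funext fun v => by simp [hB, hχ, hhead, htail])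
    · exact Or.inl (funext fun v => by simp [hB, hχ, hhead, htail])
  · rw [(hP p hp).1]
    by_cases he : e ∈ P
    · exact (hP e he).1.le
    · linarith [hnotP e he]
  · simp [hχ, hst.symm]
  · rw [mulVec_single_one, col_apply, hB]
    split_ifs <;> norm_num

theorem damped_steps_stay_centered_general {V E : Type*} [Fintype V] [Fintype E] [DecidableEq V]
    [DecidableEq E] {B : Matrix E V ℝ} {χ : V → ℝ} {u g : E → ℝ} {P : Finset E} {F μ k ε : ℝ}
    {f fc : ℕ → E → ℝ} {i : ℕ} (hP : IsPreconditioner B χ u P) (hg : ∀ e, |g e| ≤ u e)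
    (hgF : Bᵀ *ᵥ g = F • χ) (hμ : 0 < μ) (hμF : μ ≤ F) (hk : 1 ≤ k)
    (hkm : k ≤ √(Fintype.card E) / 10) (hε : 0 < ε) (hεk : ε ≤ 1 / 10 ^ 8 / k ^ 3)
    (h : IsDampedTrajectory B u χ F μ k ε f fc) (hi : i ≤ k / ε) :
    (∀ e, |f i e| < u e) ∧
      IsCenteredFlow B u χ F (1 / 1000) (pathParam (Fintype.card E) μ ε i) (f i) ∧
      (∀ e, √(resist u (f i) e) * |f i e - fc i e| ≤ 0.1) ∧
      ∀ e, Real.exp (-0.2) * resist u (fc i) e ≤ resist u (f i) e ∧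
        resist u (f i) e ≤ Real.exp 0.2 * resist u (fc i) e := by
  have : Nonempty E := by
    by_contra hE
    rw [not_nonempty_iff] at hE
    norm_num at hkm
    linarith
  have hc := h.isCentralFlow i hi
  have hnear := h.isNearCentral hP hg hgF hμ hμF hk hkm hε hεk hi
  have hclose := hnear.weightedNorm_sub_le hc (by norm_num)
  have hwithin : WithinFactor (Real.exp 0.2) (resist u (f i)) (resist u (fc i)) :=
    (hnear.withinFactor_resist hc (by norm_num)).mono (fun e => (resist_pos (hnear.abs_lt e)).le)
      (fun e => (resist_pos (hc.1 e)).le) (by linarith [Real.add_one_le_exp (0.2 : ℝ)])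
  exact ⟨hnear.abs_lt, hnear.isCenteredFlow,
    fun e => (sqrt_mul_abs_le_weightedNorm _ _ e).trans (hclose.trans (by norm_num)),
    fun e => ⟨hwithin.exp_neg_mul_le e, (hwithin e).1⟩⟩

end MainTheorem

/-- Lemma `cdmaintain`: there is an absolute constant `c ∈ (0,1)` so
that, with `ε_step = ε_solve = c k⁻³`, iterating damped electric-flow steps computed with
`ε_solve`-approximate resistances and solvers from the central flow `f(μ)` keeps every
iterate `f⁽ⁱ⁾` strictly feasible, `1/1000`-centered for `μ⁽ⁱ⁾ = μ − (i ε_step/√m)μ`,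
within `ℓ_∞` distance `0.1` of `f(μ⁽ⁱ⁾)` in the `R(f⁽ⁱ⁾)^{1/2}` metric, and with
resistances within `e^{±0.2}` of those of `f(μ⁽ⁱ⁾)`, for all `0 ≤ i ≤ k/ε_step`. -/
theorem damped_steps_stay_centered :
    ∃ c : ℝ, 0 < c ∧ c < 1 ∧
      ∀ (V E : Type) [Fintype V] [Fintype E] [DecidableEq V] [DecidableEq E]
        (head tail : E → V) (s t : V), s ≠ t →
        ∀ u : E → ℝ, (∀ e, 0 < u e) →
        ∀ B : Matrix E V ℝ,
          (∀ e v, B e v =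
            (if v = head e then (1 : ℝ) else 0) - (if v = tail e then 1 else 0)) →
        ∀ χst : V → ℝ,
          (χst = fun v => (if v = t then (1 : ℝ) else 0) - (if v = s then 1 else 0)) →
        (∀ x : V → ℝ, (∀ e, x (head e) = x (tail e)) → ∀ v w, x v = x w) →
        ∀ Fstar : ℝ,
          IsGreatest {F : ℝ | ∃ f : E → ℝ, (∀ e, |f e| ≤ u e) ∧ Bᵀ *ᵥ f = F • χst} Fstar →
        ∀ (U : ℝ) (P : Finset E), Preconditioned head tail s t u U P →
        ∀ μ : ℝ, 0 < μ → μ ≤ Fstar →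
        ∀ k : ℝ, 1 ≤ k → k ≤ Real.sqrt (Fintype.card E) / 10 →
        ∀ εstep εsolve : ℝ, εstep = c / k ^ 3 → εsolve = c / k ^ 3 →
        ∀ (f rt : ℕ → E → ℝ) (Lt Ltd : ℕ → Matrix V V ℝ) (fc : ℕ → E → ℝ) (μi : ℕ → ℝ),
          (∀ i : ℕ, μi i = μ - (i * εstep / Real.sqrt (Fintype.card E)) * μ) →
          (∀ i : ℕ, (i : ℝ) ≤ k / εstep → 0 < μi i) →
          (∀ i : ℕ, (i : ℝ) ≤ k / εstep → IsCentralFlow B u χst Fstar (μi i) (fc i)) →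
          f 0 = fc 0 →
          (∀ i : ℕ, (i : ℝ) < k / εstep →
            (∀ e, Real.exp (-εsolve) * resist u (f i) e ≤ rt i e ∧
              rt i e ≤ Real.exp εsolve * resist u (f i) e) ∧
            (Lt i).PosSemidef ∧
            (∀ x : V → ℝ, Lt i *ᵥ x = 0 ↔ ∃ c' : ℝ, x = fun _ => c') ∧
            (Lt i - Real.exp (-εsolve) • lapOf B u (f i)).PosSemidef ∧
            (Real.exp εsolve • lapOf B u (f i) - Lt i).PosSemidef ∧
            IsMoorePenrose (Lt i) (Ltd i) ∧
            f (i + 1) = f i + (εstep * μ / Real.sqrt (Fintype.card E)) •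
              fun e => (rt i e)⁻¹ * (B *ᵥ (Ltd i *ᵥ χst)) e) →
          ∀ i : ℕ, (i : ℝ) ≤ k / εstep →
            (∀ e, |f i e| < u e) ∧
            IsCenteredFlow B u χst Fstar (1 / 1000) (μi i) (f i) ∧
            (∀ e, Real.sqrt (resist u (f i) e) * |f i e - fc i e| ≤ 0.1) ∧
            (∀ e, Real.exp (-(0.2 : ℝ)) * resist u (fc i) e ≤ resist u (f i) e ∧
              resist u (f i) e ≤ Real.exp 0.2 * resist u (fc i) e) := by
  refine ⟨1 / 10 ^ 8, by norm_num, by norm_num, ?_⟩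
  rintro V E _ _ _ _ head tail s t hst u - B hB χst hχ - F ⟨⟨g, hg, hgF⟩, -⟩ U P hP μ hμ hμF
    k hk hkm _ _ rfl rfl f rt Lt Ltd fc μi hμi - hfc h0 hstep i hi
  obtain rfl : μi = pathParam (Fintype.card E) μ (1 / 10 ^ 8 / k ^ 3) := funext hμi
  refine damped_steps_stay_centered_general (hP.isPreconditioner hst hB hχ) hg hgF hμ hμF hk hkm
    (by positivity) le_rfl ⟨hfc, h0, fun j hj => ?_⟩ hi
  obtain ⟨hrt, -, -, hlower, hupper, hpinv, hfj⟩ := hstep j hj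
  exact ⟨_, ⟨rt j, Lt j, Ltd j, hrt, hlower, hupper, hpinv, rfl⟩, hfj⟩
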